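/- Let s > 7/2 and suppose (ξ_k)_{k≥1} satisfies Σ_{k≥1} ‖ξ_k‖_{H^σ} < ∞ for every σ ≥ 0. Define, for θ ∈ H^s(𝕋), g(θ) = −(𝓗θ) ∂_x θ + ½ Σ_{k=1}^∞ 𝓛²_{ξ_k} θ, and for ε ∈ (0,1) let T̃_ε = (1 − ε²∂²_x)^{-1}. Then there is a constant C > 0, independent of ε, such that for all θ ∈ H^s(𝕋): 2 (T̃_ε g(θ), T̃_ε θ)_{H^s} + Σ_{k=1}^∞ ‖T̃_ε 𝓛_{ξ_k} θ‖²_{H^s} ≤ C (1 + ‖∂_x θ‖_{L^∞} + ‖𝓗∂_x θ‖_{L^∞}) ‖θ‖²_{H^s}. -/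

import Mathlib

noncomputable section
open scoped BigOperators

/-- A (complex-valued) function on the torus `𝕋 = ℝ/2πℤ`, represented by its sequence of
Fourier coefficients `f̂ : ℤ → ℂ`. -/
abbrev FC := ℤ → ℂ

namespace FC

/-- The Sobolev weight `(1+k²)^s`. -/
def wt (s : ℝ) (k : ℤ) : ℝ := (1 + (k : ℝ) ^ 2) ^ s

/-- `c` represents a function belonging to the Sobolev space `H^s(𝕋)`. -/
def memHs (s : ℝ) (c : FC) : Prop := Summable fun k : ℤ => wt s k * ‖c k‖ ^ 2

/-- The `H^s(𝕋)` norm: `‖f‖²_{H^s} = Σ_{k∈ℤ} (1+k²)^s |f̂(k)|²`. -/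
def hsNorm (s : ℝ) (c : FC) : ℝ := Real.sqrt (∑' k : ℤ, wt s k * ‖c k‖ ^ 2)

/-- The `H^s(𝕋)` inner product `(f,g)_{H^s} = Σ_{k∈ℤ} (1+k²)^s f̂(k) conj(ĝ(k))`
(its real part; the sum is real for real-valued functions). -/
def hsInner (s : ℝ) (c d : FC) : ℝ :=
  (∑' k : ℤ, ((wt s k : ℂ) * (c k * (starRingEnd ℂ) (d k)))).re

/-- `c` represents a real-valued function (conjugate-symmetric coefficients). -/
def isReal (c : FC) : Prop := ∀ k : ℤ, c (-k) = (starRingEnd ℂ) (c k)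

/-- The derivative `∂ₓ`, i.e. the Fourier multiplier `ik`. -/
def D1 (c : FC) : FC := fun k => Complex.I * (k : ℂ) * c k

/-- The pointwise product of functions, i.e. convolution of Fourier coefficients. -/
def mul (c d : FC) : FC := fun k => ∑' j : ℤ, c j * d (k - j)

/-- The represented function, evaluated at `x ∈ ℝ`. -/
def eval (c : FC) (x : ℝ) : ℂ := ∑' k : ℤ, c k * Complex.exp (Complex.I * (k : ℂ) * (x : ℂ))

/-- The `L^∞` norm (supremum of the represented periodic function over ℝ). -/
def linfty (c : FC) : ℝ := ⨆ x : ℝ, ‖eval c x‖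

/-- The `W^{1,∞}` norm. -/
def w1infty (c : FC) : ℝ := linfty c + linfty (D1 c)

/-- A Fourier multiplier operator with real symbol `m`. -/
def mult (m : ℤ → ℝ) (c : FC) : FC := fun k => (m k : ℂ) * c k

/-- The operator `(1-∂ₓ²)⁻¹`, i.e. the Fourier multiplier `(1+k²)⁻¹`. -/
def helmInv : FC → FC := mult fun k => (1 + (k : ℝ) ^ 2)⁻¹

/-- The operator `1-∂ₓ²`, i.e. the Fourier multiplier `1+k²`. -/
def helm : FC → FC := mult fun k => 1 + (k : ℝ) ^ 2

/-- The operator `T̃_ε = (1-ε²∂ₓ²)⁻¹`, i.e. the Fourier multiplier `(1+ε²k²)⁻¹`. -/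
def T (ε : ℝ) : FC → FC := mult fun k => (1 + ε ^ 2 * (k : ℝ) ^ 2)⁻¹

/-- The periodic Hilbert transform, i.e. the Fourier multiplier `-i·sgn(k)`. -/
def hilbert (c : FC) : FC := fun k => -Complex.I * (Int.sign k : ℂ) * c k

/-- The Friedrichs-type mollifier `J_ε`, the Fourier multiplier `ĵ(εk)`. -/
def Jmol (jhat : ℝ → ℝ) (ε : ℝ) : FC → FC := mult fun k => jhat (ε * (k : ℝ))

/-- The generalized Lie derivative `𝓛_ξ f = ξ ∂ₓ f + (∂ₓ ξ) f`. -/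
def lie (ξ c : FC) : FC := mul ξ (D1 c) + mul (D1 ξ) c

/-- `𝓛²_ξ f = 𝓛_ξ (𝓛_ξ f)`. -/
def lie2 (ξ c : FC) : FC := lie ξ (lie ξ c)

/-- The coefficientwise sum `Σ_{k∈ℕ} F k` of a sequence of functions. -/
def tsumFC (F : ℕ → FC) : FC := fun m => ∑' k : ℕ, F k m

/-- The norm on the product space `H^{s₁}×H^{s₂}`. -/
def pairNorm (s₁ s₂ : ℝ) (c d : FC) : ℝ := Real.sqrt (hsNorm s₁ c ^ 2 + hsNorm s₂ d ^ 2)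

/-- The inner product on the product space `H^{s₁}×H^{s₂}`:
`((c₁,d₁),(c₂,d₂)) ↦ (c₁,c₂)_{H^{s₁}} + (d₁,d₂)_{H^{s₂}}`. -/
def pairInner (s₁ s₂ : ℝ) (c₁ d₁ c₂ d₂ : FC) : ℝ := hsInner s₁ c₁ c₂ + hsInner s₂ d₁ d₂

end FC

/-- The singular drift of the stochastic CCF model:
`g(θ) = −(𝓗θ) ∂ₓθ + ½ Σ_k 𝓛²_{ξ_k} θ`. -/
def gCCF (ξ : ℕ → FC) (θ : FC) : FC :=
  -(FC.mul (FC.hilbert θ) (FC.D1 θ)) + (1 / 2 : ℝ) • FC.tsumFC fun k => FC.lie2 (ξ k) θ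

/-!
Write `m` for the symbol of `(1 - ∂ₓ²)^(s/2) T̃_ε`. For `s ≥ 2` it is nondecreasing in the
modulus of the frequency `x`, and `x m'(x) / m(x)` is bounded; both hold uniformly in `ε`.

The transport part of the energy is a sum over triads of frequencies `a + b = c`. Since `θ` is
real, the symmetries of the triad reduce it to `0 < a < c`, where the sign of the Hilbert transform
is constant. The exchange of `a` and `b` allows the weight `c m(c)²` to be distributed as
`P(a/c) c m(c)²` and `P(b/c) c m(c)²`, where `P(x) + P(1 - x) = 1` and the polynomial `P` vanishes
to high order at `0`; this compensates the loss of `m(c) / m(a)` for small `a`. What remains is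

  `Σ K(a, c) (c - a) θ̂(c - a) · m(a) θ̂(a) · m(c) conj(θ̂(c))`,

with `K(a, c) = (P(a/c) c m(c)² - (2c - a) m(a)²) / ((c - a) m(a) m(c))`. The Toeplitz matrix of the
positive-frequency part of `-i∂ₓθ` has norm at most `(‖∂ₓθ‖_∞ + ‖𝓗∂ₓθ‖_∞) / 2`, and `K` is a Schur
multiplier with a bound independent of `ε`: the quotient `(m(c) / m(a) - m(a) / m(c)) / (c - a)`
is an integral of powers of `m(c) / m(a)` against a logarithmic difference quotient, and the
factors so obtained are Gram matrices.

In the noise part, each of `(T̃_ε 𝓛²_ξ θ, T̃_ε θ)_{H^s}` and `‖T̃_ε 𝓛_ξ θ‖²_{H^s}` loses a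
derivative on `θ`, but averaging their sum over the exchange of the two noise modes and the
exchange of the two modes of `θ` turns its symbol into a second difference of `x² m(x)²` minus
first differences of `x m(x)²`. These are `O(m(x)²)`, up to derivatives of `ξ`.
-/

section SchurMultipliers

open MeasureTheory Set

variable {α Ω : Type*}

/-- The matrix `M` is bounded by `B` as a bilinear form on finitely supported sequences. The
arithmetic mean on the right replaces `‖u‖ ‖v‖`, so that no square roots occur. -/
def FormBound (M : α → α → ℂ) (B : ℝ) : Prop :=
  ∀ (F : Finset α) (u v : α → ℂ),
    ‖∑ a ∈ F, ∑ c ∈ F, M a c * (u a * v c)‖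
      ≤ B / 2 * (∑ a ∈ F, ‖u a‖ ^ 2 + ∑ c ∈ F, ‖v c‖ ^ 2)

/-- Entrywise multiplication by `Φ` maps matrices supported on the relation `r` and bounded by `B`
(in the sense of `FormBound`) to matrices bounded by `C * B`. -/
structure IsSchurMultiplier (r : α → α → Prop) (C : ℝ) (Φ : α → α → ℝ) : Prop where
  nonneg : 0 ≤ C
  formBound : ∀ (M : α → α → ℂ) (B : ℝ), 0 ≤ B → (∀ a c, ¬ r a c → M a c = 0) →
    FormBound M B → FormBound (fun a c => (Φ a c : ℂ) * M a c) (C * B)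

namespace FormBound

variable {M : α → α → ℂ} {B : ℝ}

theorem norm_sum_mul_mul_le (hM : FormBound M B) (d e : α → ℝ) (F : Finset α) (u v : α → ℂ) :
    ‖∑ a ∈ F, ∑ c ∈ F, ((d a * e c : ℝ) : ℂ) * M a c * (u a * v c)‖
      ≤ B / 2 * (∑ a ∈ F, d a * d a * ‖u a‖ ^ 2 + ∑ c ∈ F, e c * e c * ‖v c‖ ^ 2) := by
  have norm_sq (x : ℝ) (z : ℂ) : ‖(x : ℂ) * z‖ ^ 2 = x * x * ‖z‖ ^ 2 := by
    rw [norm_mul, mul_pow, Complex.norm_real, Real.norm_eq_abs, sq_abs, sq x]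
  have h := hM F (fun a => d a * u a) (fun c => e c * v c)
  simp only [norm_sq] at h
  refine (le_of_eq (congrArg _ ?_)).trans h
  refine Finset.sum_congr rfl fun a _ => Finset.sum_congr rfl fun c _ => ?_
  push_cast
  ring

theorem norm_sum_integral_mul_le [MeasurableSpace Ω] {μ : Measure Ω} {φ : Ω → α → α → ℝ}
    (hφ : ∀ a c, Integrable (fun t => φ t a c) μ) (F : Finset α) (u v : α → ℂ) {g : Ω → ℝ}
    (hg : Integrable g μ)
    (hle : ∀ᵐ t ∂μ, ‖∑ a ∈ F, ∑ c ∈ F, (φ t a c : ℂ) * M a c * (u a * v c)‖ ≤ g t) :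
    ‖∑ a ∈ F, ∑ c ∈ F, ((∫ t, φ t a c ∂μ : ℝ) : ℂ) * M a c * (u a * v c)‖ ≤ ∫ t, g t ∂μ := by
  have hint (a c : α) : Integrable (fun t => (φ t a c : ℂ) * M a c * (u a * v c)) μ :=
    ((hφ a c).ofReal.mul_const _).mul_const _
  have hswap : ∑ a ∈ F, ∑ c ∈ F, ((∫ t, φ t a c ∂μ : ℝ) : ℂ) * M a c * (u a * v c)
      = ∫ t, ∑ a ∈ F, ∑ c ∈ F, (φ t a c : ℂ) * M a c * (u a * v c) ∂μ := by
    rw [integral_finsetSum _ fun a _ => integrable_finsetSum _ fun c _ => hint a c]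
    refine Finset.sum_congr rfl fun a _ => ?_
    rw [integral_finsetSum _ fun c _ => hint a c]
    refine Finset.sum_congr rfl fun c _ => ?_
    rw [integral_mul_const, integral_mul_const, integral_complex_ofReal]
  rw [hswap]
  exact norm_integral_le_of_norm_le hg hle

end FormBound

namespace IsSchurMultiplier

variable {r : α → α → Prop} {C D : ℝ} {Φ Ψ : α → α → ℝ}

theorem congr (hΦ : IsSchurMultiplier r C Φ) (h : ∀ a c, r a c → Ψ a c = Φ a c) :
    IsSchurMultiplier r C Ψ := by
  refine ⟨hΦ.nonneg, fun M B hB hM hMB => ?_⟩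
  have heq : (fun a c => (Ψ a c : ℂ) * M a c) = fun a c => (Φ a c : ℂ) * M a c := by
    funext a c
    by_cases hac : r a c
    · rw [h a c hac]
    · rw [hM a c hac, mul_zero, mul_zero]
  exact heq ▸ hΦ.formBound M B hB hM hMB

theorem const (x : ℝ) : IsSchurMultiplier r |x| fun _ _ => x := by
  refine ⟨abs_nonneg x, fun M B _ _ hMB F u v => ?_⟩
  simp only [mul_assoc, ← Finset.mul_sum, norm_mul, Complex.norm_real, Real.norm_eq_abs]
  rw [mul_div_assoc, mul_assoc]
  exact mul_le_mul_of_nonneg_left (hMB F u v) (abs_nonneg x)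

theorem add (hΦ : IsSchurMultiplier r C Φ) (hΨ : IsSchurMultiplier r D Ψ) :
    IsSchurMultiplier r (C + D) fun a c => Φ a c + Ψ a c := by
  refine ⟨add_nonneg hΦ.nonneg hΨ.nonneg, fun M B hB hM hMB F u v => ?_⟩
  simp only [Complex.ofReal_add, add_mul, Finset.sum_add_distrib]
  refine (norm_add_le _ _).trans ((add_le_add (hΦ.formBound M B hB hM hMB F u v)
    (hΨ.formBound M B hB hM hMB F u v)).trans (le_of_eq (by ring)))

theorem mul (hΦ : IsSchurMultiplier r C Φ) (hΨ : IsSchurMultiplier r D Ψ) :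
    IsSchurMultiplier r (C * D) fun a c => Φ a c * Ψ a c := by
  refine ⟨mul_nonneg hΦ.nonneg hΨ.nonneg, fun M B hB hM hMB => ?_⟩
  simp only [Complex.ofReal_mul, mul_assoc]
  exact hΦ.formBound _ (D * B) (mul_nonneg hΨ.nonneg hB)
    (fun a c hac => by rw [hM a c hac, mul_zero]) (hΨ.formBound M B hB hM hMB)

theorem const_mul (x : ℝ) (hΦ : IsSchurMultiplier r C Φ) :
    IsSchurMultiplier r (|x| * C) fun a c => x * Φ a c :=
  (const x).mul hΦ

theorem sub (hΦ : IsSchurMultiplier r C Φ) (hΨ : IsSchurMultiplier r D Ψ) :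
    IsSchurMultiplier r (C + D) fun a c => Φ a c - Ψ a c := by
  simpa [sub_eq_add_neg] using hΦ.add (hΨ.const_mul (-1))

theorem pow (hΦ : IsSchurMultiplier r C Φ) (n : ℕ) :
    IsSchurMultiplier r (C ^ n) fun a c => Φ a c ^ n := by
  induction n with
  | zero => simpa using const (r := r) 1
  | succ n ih => simpa only [pow_succ] using ih.mul hΦ

theorem exists_polynomial_eval (r : α → α → Prop) (C : ℝ) (p : Polynomial ℝ) :
    ∃ D, ∀ Φ, IsSchurMultiplier r C Φ → IsSchurMultiplier r D fun a c => p.eval (Φ a c) := by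
  induction p using Polynomial.induction_on' with
  | add p q hp hq =>
    obtain ⟨D, hD⟩ := hp
    obtain ⟨E, hE⟩ := hq
    exact ⟨D + E, fun Φ hΦ => by simpa only [Polynomial.eval_add] using (hD Φ hΦ).add (hE Φ hΦ)⟩
  | monomial n x =>
    exact ⟨|x| * C ^ n, fun Φ hΦ => by
      simpa only [Polynomial.eval_monomial] using (hΦ.pow n).const_mul x⟩

theorem integral [MeasurableSpace Ω] {μ : Measure Ω} [IsFiniteMeasure μ] {φ : Ω → α → α → ℝ}
    (hC : 0 ≤ C) (hint : ∀ a c, Integrable (fun t => φ t a c) μ)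
    (hφ : ∀ᵐ t ∂μ, IsSchurMultiplier r C (φ t)) :
    IsSchurMultiplier r (μ.real univ * C) fun a c => ∫ t, φ t a c ∂μ := by
  refine ⟨by positivity, fun M B hB hM hMB F u v => ?_⟩
  calc _ ≤ ∫ _, C * B / 2 * (∑ a ∈ F, ‖u a‖ ^ 2 + ∑ c ∈ F, ‖v c‖ ^ 2) ∂μ :=
        FormBound.norm_sum_integral_mul_le hint F u v (integrable_const _)
          (hφ.mono fun t ht => ht.formBound M B hB hM hMB F u v)
    _ = μ.real univ * C * B / 2 * (∑ a ∈ F, ‖u a‖ ^ 2 + ∑ c ∈ F, ‖v c‖ ^ 2) := by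
        rw [integral_const, smul_eq_mul]
        ring

/-- Gram matrices are Schur multipliers: for fixed `t` the factors `p t a` and `p t c` are absorbed
into the test sequences. -/
theorem gram [MeasurableSpace Ω] {μ : Measure Ω} {p : Ω → α → ℝ} (hC : 0 ≤ C)
    (hint : ∀ a c, Integrable (fun t => p t a * p t c) μ)
    (hdiag : ∀ a, ∫ t, p t a * p t a ∂μ ≤ C) :
    IsSchurMultiplier r C fun a c => ∫ t, p t a * p t c ∂μ := by
  refine ⟨hC, fun M B hB _ hMB F u v => ?_⟩
  have hsum (w : α → ℂ) : Integrable (fun t => ∑ a ∈ F, p t a * p t a * ‖w a‖ ^ 2) μ :=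
    integrable_finsetSum _ fun a _ => (hint a a).mul_const _
  have hle (w : α → ℂ) : ∫ t, ∑ a ∈ F, p t a * p t a * ‖w a‖ ^ 2 ∂μ ≤ C * ∑ a ∈ F, ‖w a‖ ^ 2 := by
    rw [integral_finsetSum _ fun a _ => (hint a a).mul_const _, Finset.mul_sum]
    refine Finset.sum_le_sum fun a _ => ?_
    rw [integral_mul_const]
    exact mul_le_mul_of_nonneg_right (hdiag a) (sq_nonneg _)
  calc _ ≤ ∫ t, B / 2 * (∑ a ∈ F, p t a * p t a * ‖u a‖ ^ 2
            + ∑ c ∈ F, p t c * p t c * ‖v c‖ ^ 2) ∂μ :=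
        FormBound.norm_sum_integral_mul_le hint F u v (((hsum u).add (hsum v)).const_mul _)
          (.of_forall fun t => hMB.norm_sum_mul_mul_le (p t) (p t) F u v)
    _ ≤ B / 2 * (C * ∑ a ∈ F, ‖u a‖ ^ 2 + C * ∑ c ∈ F, ‖v c‖ ^ 2) := by
        rw [integral_const_mul, integral_add (hsum u) (hsum v)]
        gcongr <;> exact hle _
    _ = C * B / 2 * (∑ a ∈ F, ‖u a‖ ^ 2 + ∑ c ∈ F, ‖v c‖ ^ 2) := by ring

/-- If `0 ≤ w a ≤ w c`, then `w a / w c` is the inner product of the normalised indicator functions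
of `(0, w a ^ 2]` and `(0, w c ^ 2]`, so this is an instance of `IsSchurMultiplier.gram`. -/
theorem ratio {w : α → ℝ} (hw : ∀ a c, r a c → 0 ≤ w a ∧ w a ≤ w c) :
    IsSchurMultiplier r 1 fun a c => w a / w c := by
  set p : ℝ → α → ℝ := fun t a => (Ioc 0 (w a ^ 2)).indicator (fun _ => (w a)⁻¹) t
  have hmul (a c : α) : (fun t => p t a * p t c)
      = (Ioc 0 (min (w a ^ 2) (w c ^ 2))).indicator fun _ => (w a)⁻¹ * (w c)⁻¹ := by
    funext t
    rw [show Ioc 0 (min (w a ^ 2) (w c ^ 2)) = Ioc 0 (w a ^ 2) ∩ Ioc 0 (w c ^ 2) by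
      rw [Ioc_inter_Ioc, max_self], inter_indicator_mul]
  have hval (a c : α) : ∫ t, p t a * p t c = min (w a ^ 2) (w c ^ 2) * ((w a)⁻¹ * (w c)⁻¹) := by
    rw [hmul, integral_indicator measurableSet_Ioc, setIntegral_const, Real.volume_real_Ioc_of_le
      (le_min (sq_nonneg _) (sq_nonneg _)), sub_zero, smul_eq_mul]
  refine (gram (μ := volume) (p := p) zero_le_one (fun a c => ?_) fun a => ?_).congr
    fun a c hac => ?_
  · rw [hmul]
    exact (integrable_indicator_iff measurableSet_Ioc).2 (integrableOn_const (by simp))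
  · rw [hval, min_self, sq]
    rcases eq_or_ne (w a) 0 with ha | ha
    · simp [ha]
    · exact le_of_eq (by field_simp)
  · obtain ⟨h0, hle⟩ := hw a c hac
    rw [hval, min_eq_left (pow_le_pow_left₀ h0 hle 2), div_eq_mul_inv, ← mul_assoc]
    rcases eq_or_ne (w a) 0 with ha | ha
    · simp [ha]
    · field_simp

end IsSchurMultiplier

end SchurMultipliers

section Symbol

open MeasureTheory Set

/-- The Fourier symbol `(1 + x²)^(s/2) / (1 + ε²x²)` of `(1 - ∂ₓ²)^(s/2) T̃_ε`, as a function of a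
real frequency. -/
def symbol (s ε x : ℝ) : ℝ := (1 + x ^ 2) ^ (s / 2) * (1 + ε ^ 2 * x ^ 2)⁻¹

variable {s ε l κ x y ρ : ℝ} {k : ℕ}

theorem symbol_pos (s ε x : ℝ) : 0 < symbol s ε x := by
  unfold symbol
  positivity

theorem symbol_neg (s ε x : ℝ) : symbol s ε (-x) = symbol s ε x := by
  simp only [symbol, neg_sq]

theorem log_symbol (s ε x : ℝ) :
    Real.log (symbol s ε x) = s / 2 * Real.log (1 + x ^ 2) - Real.log (1 + ε ^ 2 * x ^ 2) := by
  rw [symbol, Real.log_mul (by positivity) (by positivity), Real.log_rpow (by positivity),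
    Real.log_inv, sub_eq_add_neg]

theorem symbol_le_symbol (hs : 2 ≤ s) (hε : ε ^ 2 ≤ 1) (hx : 0 ≤ x) (hxy : x ≤ y) :
    symbol s ε x ≤ symbol s ε y := by
  have hsplit (x : ℝ) : symbol s ε x
      = (1 + x ^ 2) ^ (s / 2 - 1) * ((1 + x ^ 2) / (1 + ε ^ 2 * x ^ 2)) := by
    rw [symbol, Real.rpow_sub_one (by positivity)]
    field_simp
  have hsq : x ^ 2 ≤ y ^ 2 := pow_le_pow_left₀ hx hxy 2
  have hdiv : (1 + x ^ 2) / (1 + ε ^ 2 * x ^ 2) ≤ (1 + y ^ 2) / (1 + ε ^ 2 * y ^ 2) := by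
    rw [div_le_div_iff₀ (by positivity) (by positivity)]
    nlinarith [mul_nonneg (sub_nonneg.2 hε) (sub_nonneg.2 hsq)]
  rw [hsplit, hsplit]
  have : 0 ≤ s / 2 - 1 := by linarith
  gcongr

theorem pow_mul_rpow_le_pow_mul_rpow (hl : 0 ≤ l) (hκ : 2 * κ ≤ k) (hx : 0 < x) (hxy : x ≤ y) :
    x ^ k * (1 + l * x ^ 2) ^ (-κ) ≤ y ^ k * (1 + l * y ^ 2) ^ (-κ) := by
  have hy : 0 < y := hx.trans_le hxy
  have hsq : x ^ 2 ≤ y ^ 2 := pow_le_pow_left₀ hx.le hxy 2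
  rcases le_total κ 0 with hκ0 | hκ0
  · have : 0 ≤ -κ := neg_nonneg.2 hκ0
    gcongr
  · have hsplit {x : ℝ} (hx : 0 < x) : x ^ k * (1 + l * x ^ 2) ^ (-κ)
        = x ^ (k - 2 * κ) * (x ^ 2 / (1 + l * x ^ 2)) ^ κ := by
      rw [Real.div_rpow (by positivity) (by positivity), Real.rpow_neg (by positivity),
        Real.rpow_sub hx, Real.rpow_natCast, Real.rpow_mul hx.le, Real.rpow_two]
      field_simp
    have hdiv : x ^ 2 / (1 + l * x ^ 2) ≤ y ^ 2 / (1 + l * y ^ 2) := by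
      rw [div_le_div_iff₀ (by positivity) (by positivity)]
      linarith
    rw [hsplit hx, hsplit hy]
    have : 0 ≤ k - 2 * κ := by linarith
    gcongr

theorem log_sub_log_eq_integral (hl : 0 ≤ l) (x y : ℝ) :
    Real.log (1 + l * y ^ 2) - Real.log (1 + l * x ^ 2)
      = (y ^ 2 - x ^ 2) * ∫ μ in (0 : ℝ)..l, ((1 + μ * x ^ 2) * (1 + μ * y ^ 2))⁻¹ := by
  have hpos {μ : ℝ} (hμ : μ ∈ uIcc 0 l) (z : ℝ) : 0 < 1 + μ * z ^ 2 := by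
    rw [uIcc_of_le hl] at hμ
    have := mul_nonneg hμ.1 (sq_nonneg z)
    linarith
  have hlog {μ : ℝ} (hμ : μ ∈ uIcc 0 l) (z : ℝ) :
      HasDerivAt (fun μ => Real.log (1 + μ * z ^ 2)) (z ^ 2 / (1 + μ * z ^ 2)) μ := by
    simpa using (((hasDerivAt_id μ).mul_const (z ^ 2)).const_add 1).log (hpos hμ z).ne'
  have hderiv (μ : ℝ) (hμ : μ ∈ uIcc 0 l) :
      HasDerivAt (fun μ => Real.log (1 + μ * y ^ 2) - Real.log (1 + μ * x ^ 2))
        ((y ^ 2 - x ^ 2) * ((1 + μ * x ^ 2) * (1 + μ * y ^ 2))⁻¹) μ := by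
    refine ((hlog hμ y).sub (hlog hμ x)).congr_deriv ?_
    rw [div_sub_div _ _ (hpos hμ y).ne' (hpos hμ x).ne', div_eq_mul_inv, mul_comm (1 + μ * y ^ 2)]
    ring
  have hcont : ContinuousOn
      (fun μ => (y ^ 2 - x ^ 2) * ((1 + μ * x ^ 2) * (1 + μ * y ^ 2))⁻¹) (uIcc 0 l) :=
    continuousOn_const.mul (ContinuousOn.inv₀ (by fun_prop)
      fun μ hμ => (mul_pos (hpos hμ x) (hpos hμ y)).ne')
  rw [← intervalIntegral.integral_const_mul,
    intervalIntegral.integral_eq_sub_of_hasDerivAt hderiv hcont.intervalIntegrable]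
  simp

theorem integral_sq_div_le_one (hl : 0 ≤ l) (x : ℝ) :
    ∫ μ in (0 : ℝ)..l, x / (1 + μ * x ^ 2) * (x / (1 + μ * x ^ 2)) ≤ 1 := by
  have hpos {μ : ℝ} (hμ : μ ∈ uIcc 0 l) : 0 < 1 + μ * x ^ 2 := by
    rw [uIcc_of_le hl] at hμ
    have := mul_nonneg hμ.1 (sq_nonneg x)
    linarith
  have hderiv (μ : ℝ) (hμ : μ ∈ uIcc 0 l) : HasDerivAt (fun μ => -(1 + μ * x ^ 2)⁻¹)
      (x / (1 + μ * x ^ 2) * (x / (1 + μ * x ^ 2))) μ := by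
    have hlin : HasDerivAt (fun μ : ℝ => 1 + μ * x ^ 2) (x ^ 2) μ := by
      simpa using ((hasDerivAt_id μ).mul_const (x ^ 2)).const_add 1
    have := (hpos hμ).ne'
    refine (hlin.inv this).neg.congr_deriv ?_
    field_simp
  have hcont : ContinuousOn (fun μ => x / (1 + μ * x ^ 2) * (x / (1 + μ * x ^ 2))) (uIcc 0 l) := by
    have : ContinuousOn (fun μ : ℝ => x / (1 + μ * x ^ 2)) (uIcc 0 l) :=
      continuousOn_const.div (by fun_prop) fun μ hμ => (hpos hμ).ne'
    exact this.mul this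
  rw [intervalIntegral.integral_eq_sub_of_hasDerivAt hderiv hcont.intervalIntegrable]
  have : 0 < (1 + l * x ^ 2)⁻¹ := by positivity
  simp only [zero_mul, add_zero, inv_one]
  linarith

theorem log_mul_integral_rpow (hρ : 0 < ρ) :
    Real.log ρ * ∫ t in (-1 : ℝ)..1, ρ ^ t = ρ - ρ⁻¹ := by
  have hderiv (t : ℝ) : HasDerivAt (fun t : ℝ => ρ ^ t) (Real.log ρ * ρ ^ t) t := by
    simpa only [mul_comm] using Real.hasStrictDerivAt_const_rpow hρ t |>.hasDerivAt
  have hcont : Continuous fun t : ℝ => Real.log ρ * ρ ^ t :=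
    continuous_const.mul (Real.continuous_const_rpow hρ.ne')
  rw [← intervalIntegral.integral_const_mul, intervalIntegral.integral_eq_sub_of_hasDerivAt
    (fun t _ => hderiv t) (hcont.intervalIntegrable _ _), Real.rpow_one, Real.rpow_neg_one]

/-- Polynomial cut-offs: `P` vanishes to high order at `0`, equals `1` at `1`, and is exchanged with
`1 - P` by `x ↦ 1 - x`. The induction composes `P` with the smoothstep `3P² - 2P³`. -/
theorem exists_partition_polynomial (n : ℕ) : ∃ P R Q : Polynomial ℝ,
    (∀ x, P.eval x = x ^ (n + 1) * R.eval x) ∧ (∀ x, 1 - P.eval x = (1 - x) * Q.eval x) ∧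
    ∀ x, P.eval x + P.eval (1 - x) = 1 := by
  induction n with
  | zero => exact ⟨Polynomial.X, 1, 1, by simp, by simp, by simp⟩
  | succ n ih =>
    obtain ⟨P, R, Q, hR, hQ, hP⟩ := ih
    refine ⟨P ^ 2 * (3 - 2 * P), Polynomial.X ^ n * R ^ 2 * (3 - 2 * P),
      (1 - Polynomial.X) * Q ^ 2 * (1 + 2 * P), fun x => ?_, fun x => ?_, fun x => ?_⟩ <;>
    simp only [Polynomial.eval_mul, Polynomial.eval_pow, Polynomial.eval_sub, Polynomial.eval_X,
      Polynomial.eval_ofNat, Polynomial.eval_add, Polynomial.eval_one]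
    · calc P.eval x ^ 2 * (3 - 2 * P.eval x)
          = (x ^ (n + 1) * R.eval x) ^ 2 * (3 - 2 * P.eval x) := by rw [hR]
        _ = _ := by ring
    · calc 1 - P.eval x ^ 2 * (3 - 2 * P.eval x)
          = (1 - P.eval x) ^ 2 * (1 + 2 * P.eval x) := by ring
        _ = _ := by rw [hQ]; ring
    · rw [eq_sub_of_add_eq' (hP x)]
      ring

end Symbol

section SymbolMultipliers

open MeasureTheory Set

variable {s ε l κ : ℝ} {k p : ℕ}

/-- The pairs of frequencies `0 < a < c`, to which the symmetries of the trilinear form reduce all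
interactions. -/
def PosLT (a c : ℤ) : Prop := 0 < a ∧ a < c

theorem PosLT.cast {a c : ℤ} (h : PosLT a c) : (0 : ℝ) < a ∧ (a : ℝ) < c :=
  ⟨Int.cast_pos.2 h.1, Int.cast_lt.2 h.2⟩

theorem isSchurMultiplier_div : IsSchurMultiplier PosLT 1 fun a c => (a : ℝ) / c :=
  .ratio fun _ _ h => ⟨h.cast.1.le, h.cast.2.le⟩

theorem isSchurMultiplier_symbol_div (hs : 2 ≤ s) (hε : ε ^ 2 ≤ 1) :
    IsSchurMultiplier PosLT 1 fun a c => symbol s ε a / symbol s ε c :=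
  .ratio fun _ _ h => ⟨(symbol_pos ..).le, symbol_le_symbol hs hε h.cast.1.le h.cast.2.le⟩

theorem isSchurMultiplier_pow_mul_rpow (hl : 0 ≤ l) (hκ : 2 * κ ≤ k) :
    IsSchurMultiplier PosLT 1
      fun a c => ((a : ℝ) / c) ^ k * ((1 + l * (c : ℝ) ^ 2) / (1 + l * (a : ℝ) ^ 2)) ^ κ := by
  refine (IsSchurMultiplier.ratio (w := fun a : ℤ => (a : ℝ) ^ k * (1 + l * (a : ℝ) ^ 2) ^ (-κ))
    fun a c h => ⟨?_, pow_mul_rpow_le_pow_mul_rpow hl hκ h.cast.1 h.cast.2.le⟩).congr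
      fun a c h => ?_
  · have := h.cast.1
    positivity
  · have := h.cast.1.trans h.cast.2
    rw [Real.div_rpow (by positivity) (by positivity), Real.rpow_neg (by positivity),
      Real.rpow_neg (by positivity), div_pow]
    field_simp

theorem isSchurMultiplier_pow_mul_symbol_div_rpow (hs : 0 ≤ s) (hsp : s ≤ p) {t : ℝ}
    (ht : t ∈ Ioc (-1 : ℝ) 1) : IsSchurMultiplier PosLT 1
      fun a c => ((a : ℝ) / c) ^ (p + 2) * (symbol s ε c / symbol s ε a) ^ t := by
  have hst : 2 * (s / 2 * t) ≤ p := by nlinarith [mul_le_mul_of_nonneg_left ht.2 hs]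
  have ht2 : 2 * (-t) ≤ (2 : ℕ) := by push_cast; linarith [ht.1]
  refine (one_mul (1 : ℝ)) ▸ ((isSchurMultiplier_pow_mul_rpow zero_le_one hst).mul
    (isSchurMultiplier_pow_mul_rpow (sq_nonneg ε) ht2)).congr fun a c _ => ?_
  simp only [symbol, one_mul]
  rw [mul_div_mul_comm, ← Real.div_rpow (by positivity) (by positivity),
    Real.mul_rpow (by positivity) (by positivity), ← Real.rpow_mul (by positivity),
    inv_div_inv, Real.rpow_neg (by positivity), ← Real.inv_rpow (by positivity), inv_div]
  ring

theorem isSchurMultiplier_mul_log_sub_log_div (hl : 0 ≤ l) : IsSchurMultiplier PosLT 2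
    fun a c => a * (Real.log (1 + l * (c : ℝ) ^ 2) - Real.log (1 + l * (a : ℝ) ^ 2)) / (c - a) := by
  have hcont (a : ℤ) : ContinuousOn (fun μ : ℝ => (a : ℝ) / (1 + μ * (a : ℝ) ^ 2)) (Icc 0 l) :=
    continuousOn_const.div (by fun_prop) fun μ hμ => by
      have := hμ.1
      positivity
  have hgram : IsSchurMultiplier PosLT 1 fun a c => ∫ μ in Ioc 0 l,
      (a : ℝ) / (1 + μ * (a : ℝ) ^ 2) * ((c : ℝ) / (1 + μ * (c : ℝ) ^ 2)) :=
    .gram zero_le_one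
      (fun a c => (((hcont a).mul (hcont c)).integrableOn_compact isCompact_Icc).mono_set
        Ioc_subset_Icc_self)
      fun a => by
        rw [← intervalIntegral.integral_of_le hl]
        exact integral_sq_div_le_one hl a
  have hone : IsSchurMultiplier PosLT 2 fun a c : ℤ => 1 + (a : ℝ) / c := by
    convert (IsSchurMultiplier.const 1).add isSchurMultiplier_div using 1
    norm_num
  refine (mul_one (2 : ℝ)) ▸ (hone.mul hgram).congr fun a c h => ?_
  have hc := (h.cast.1.trans h.cast.2).ne'
  have hca := (sub_pos.2 h.cast.2).ne'
  rw [log_sub_log_eq_integral hl, ← intervalIntegral.integral_of_le hl]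
  have hpull : ∫ μ in (0 : ℝ)..l, (a : ℝ) / (1 + μ * (a : ℝ) ^ 2) * (c / (1 + μ * (c : ℝ) ^ 2))
      = (a : ℝ) * c * ∫ μ in (0 : ℝ)..l, ((1 + μ * (a : ℝ) ^ 2) * (1 + μ * (c : ℝ) ^ 2))⁻¹ := by
    rw [← intervalIntegral.integral_const_mul]
    congr! 2
    rw [div_mul_div_comm, div_eq_mul_inv]
  rw [hpull]
  field_simp
  ring

theorem isSchurMultiplier_mul_log_symbol_div (s ε : ℝ) :
    IsSchurMultiplier PosLT (|s / 2| * 2 + 2)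
      fun a c => a * Real.log (symbol s ε c / symbol s ε a) / (c - a) := by
  refine (((isSchurMultiplier_mul_log_sub_log_div zero_le_one).const_mul (s / 2)).sub
    (isSchurMultiplier_mul_log_sub_log_div (sq_nonneg ε))).congr fun a c _ => ?_
  rw [Real.log_div (symbol_pos ..).ne' (symbol_pos ..).ne', log_symbol, log_symbol]
  ring_nf

theorem isSchurMultiplier_pow_mul_symbol_div_sub_inv (hs : 0 ≤ s) (hsp : s ≤ p) (ε : ℝ) :
    IsSchurMultiplier PosLT ((|s / 2| * 2 + 2) * 2) fun a c => ((a : ℝ) / c) ^ (p + 3) *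
      (c / (c - a) * (symbol s ε c / symbol s ε a - (symbol s ε c / symbol s ε a)⁻¹)) := by
  have hpos (a c : ℤ) : 0 < symbol s ε c / symbol s ε a := div_pos (symbol_pos ..) (symbol_pos ..)
  have hint : IsSchurMultiplier PosLT 2 fun a c => ∫ t in Ioc (-1 : ℝ) 1,
      ((a : ℝ) / c) ^ (p + 2) * (symbol s ε c / symbol s ε a) ^ t := by
    have hcont (a c : ℤ) : Continuous fun t : ℝ =>
        ((a : ℝ) / c) ^ (p + 2) * (symbol s ε c / symbol s ε a) ^ t :=
      continuous_const.mul (Real.continuous_const_rpow (hpos a c).ne')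
    convert IsSchurMultiplier.integral zero_le_one
      (fun a c => (hcont a c).integrableOn_Ioc (μ := volume))
      (ae_restrict_of_forall_mem measurableSet_Ioc fun t ht =>
        isSchurMultiplier_pow_mul_symbol_div_rpow hs hsp ht) using 1
    simp only [measureReal_restrict_apply_univ, Real.volume_real_Ioc]
    norm_num
  refine ((isSchurMultiplier_mul_log_symbol_div s ε).mul hint).congr fun a c h => ?_
  have hc := (h.cast.1.trans h.cast.2).ne'
  have hca := (sub_pos.2 h.cast.2).ne'
  rw [← log_mul_integral_rpow (hpos a c), ← intervalIntegral.integral_of_le (by norm_num),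
    intervalIntegral.integral_const_mul, pow_succ _ (p + 2)]
  field_simp

/-- The multiplier that carries the bulk of the trilinear form: the cut-off `P` removes the
singularity of `m_c / m_a` at `a = 0`, and is `1` to first order where the denominator vanishes. -/
theorem exists_isSchurMultiplier_trilinear (hs : 2 ≤ s) : ∃ P : Polynomial ℝ,
    (∀ x, P.eval x + P.eval (1 - x) = 1) ∧ ∃ C, ∀ ε : ℝ, ε ^ 2 ≤ 1 →
      IsSchurMultiplier PosLT C fun a c =>
        (P.eval ((a : ℝ) / c) * c * symbol s ε c ^ 2 - (2 * c - a) * symbol s ε a ^ 2)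
          / ((c - a) * (symbol s ε a * symbol s ε c)) := by
  obtain ⟨p, hp⟩ := exists_nat_ge s
  obtain ⟨P, R, Q, hR, hQ, hP⟩ := exists_partition_polynomial (p + 2)
  obtain ⟨CR, hCR⟩ := IsSchurMultiplier.exists_polynomial_eval PosLT 1 R
  obtain ⟨CQ, hCQ⟩ := IsSchurMultiplier.exists_polynomial_eval PosLT 1 (Q + 1)
  refine ⟨P, hP, _, fun ε hε => (((hCR _ isSchurMultiplier_div).mul
    (isSchurMultiplier_pow_mul_symbol_div_sub_inv (by linarith) hp ε)).sub
    ((hCQ _ isSchurMultiplier_div).mul (isSchurMultiplier_symbol_div hs hε))).congr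
    fun a c h => ?_⟩
  have hma := (symbol_pos s ε a).ne'
  have hmc := (symbol_pos s ε c).ne'
  have hc := (h.cast.1.trans h.cast.2).ne'
  have hca := (sub_pos.2 h.cast.2).ne'
  have hQ' : (c - a) * Q.eval ((a : ℝ) / c) = c * (1 - P.eval ((a : ℝ) / c)) := by
    rw [hQ]
    field_simp
  have hPR : P.eval ((a : ℝ) / c) = (a / c : ℝ) ^ (p + 3) * R.eval ((a : ℝ) / c) := hR _
  have hdiff : c / (c - a) * (symbol s ε c / symbol s ε a - (symbol s ε c / symbol s ε a)⁻¹)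
      * ((c - a) * (symbol s ε a * symbol s ε c))
      = c * (symbol s ε c ^ 2 - symbol s ε a ^ 2) := by field_simp
  have hdiv : symbol s ε a / symbol s ε c * ((c - a) * (symbol s ε a * symbol s ε c))
      = (c - a) * symbol s ε a ^ 2 := by field_simp
  rw [div_eq_iff (mul_ne_zero hca (mul_ne_zero hma hmc)), Polynomial.eval_add, Polynomial.eval_one]
  linear_combination c * (symbol s ε c ^ 2 - symbol s ε a ^ 2) * hPR + symbol s ε a ^ 2 * hQ'
    - R.eval ((a : ℝ) / c) * (a / c : ℝ) ^ (p + 3) * hdiff + (Q.eval ((a : ℝ) / c) + 1) * hdiv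

end SymbolMultipliers

section Toeplitz

open MeasureTheory AddCircle ComplexConjugate

section Circle

variable {T : ℝ} [Fact (0 < T)] {G : ℤ → ℂ} {n : ℤ}

theorem summable_smul_fourier (hG : Summable fun k => ‖G k‖) :
    Summable fun k => G k • (fourier k : C(AddCircle T, ℂ)) :=
  .of_norm (hG.congr fun k => by rw [norm_smul, fourier_norm, mul_one])

theorem fourierCoeff_tsum_smul_fourier (hG : Summable fun k => ‖G k‖) :
    fourierCoeff (∑' k, G k • fourier k : C(AddCircle T, ℂ)) = G := by
  ext n
  have hrepr (f : C(AddCircle T, ℂ)) : fourierCoeff f n =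
      (innerSL ℂ (fourierBasis n) ∘L ContinuousMap.toLp 2 haarAddCircle ℂ) f := by
    rw [← fourierCoeff_toLp, ← fourierBasis_repr, HilbertBasis.repr_apply_apply]
    rfl
  rw [hrepr, ContinuousLinearMap.map_tsum _ (summable_smul_fourier hG)]
  simp_rw [map_smul, ← hrepr, fourierCoeff_fourier, smul_eq_mul]
  rw [tsum_eq_single n fun k hk => by rw [Pi.single_eq_of_ne hk.symm, mul_zero],
    Pi.single_eq_same, mul_one]

theorem integral_norm_sum_fourier_sq (F : Finset ℤ) (u : ℤ → ℂ) :
    ∫ t : AddCircle T, ‖∑ a ∈ F, u a * fourier a t‖ ^ 2 ∂haarAddCircle = ∑ a ∈ F, ‖u a‖ ^ 2 := by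
  set f : C(AddCircle T, ℂ) := ∑ a ∈ F, u a • fourier a with hf
  have hcoeff (k : ℤ) : fourierCoeff f k = if k ∈ F then u k else 0 := by
    rw [hf, ContinuousMap.coe_sum, fourierCoeff.sum _ _ fun a _ =>
      (map_continuous (u a • fourier a)).integrable_of_hasCompactSupport
        (HasCompactSupport.of_compactSpace _), Finset.sum_apply]
    simp_rw [ContinuousMap.coe_smul, fourierCoeff.const_smul, fourierCoeff_fourier,
      Pi.single_apply, smul_eq_mul, mul_ite, mul_one, mul_zero]
    rw [Finset.sum_ite_eq]
  have hparseval := tsum_sq_fourierCoeff (ContinuousMap.toLp 2 haarAddCircle ℂ f)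
  simp_rw [fourierCoeff_toLp, hcoeff] at hparseval
  rw [tsum_eq_sum (s := F) fun k hk => by rw [if_neg hk, norm_zero, sq, mul_zero],
    Finset.sum_congr rfl fun k hk => by rw [if_pos hk]] at hparseval
  rw [hparseval]
  refine integral_congr_ae ?_
  filter_upwards [ContinuousMap.coeFn_toLp (p := 2) (𝕜 := ℂ) haarAddCircle f] with t ht
  rw [ht, hf, ContinuousMap.sum_apply]
  rfl

theorem sum_sum_fourierCoeff_mul (f : C(AddCircle T, ℂ)) (F : Finset ℤ) (u v : ℤ → ℂ) :
    ∑ a ∈ F, ∑ c ∈ F, fourierCoeff f (c - a) * (u a * v c)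
      = ∫ t : AddCircle T, f t * ((∑ a ∈ F, u a * fourier a t)
        * conj (∑ c ∈ F, conj (v c) * fourier c t)) ∂haarAddCircle := by
  have hint {g : AddCircle T → ℂ} (hg : Continuous g) : Integrable g haarAddCircle :=
    hg.integrable_of_hasCompactSupport (HasCompactSupport.of_compactSpace _)
  simp_rw [map_sum, map_mul, Complex.conj_conj, ← fourier_neg, Finset.sum_mul_sum, Finset.mul_sum]
  rw [integral_finsetSum _ fun a _ => integrable_finsetSum _ fun c _ => hint (by fun_prop)]
  refine Finset.sum_congr rfl fun a _ => ?_
  rw [integral_finsetSum _ fun c _ => hint (by fun_prop)]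
  refine Finset.sum_congr rfl fun c _ => ?_
  rw [fourierCoeff, ← integral_mul_const]
  refine integral_congr_ae (.of_forall fun t => ?_)
  simp only [neg_sub, sub_eq_add_neg a c, fourier_add, smul_eq_mul]
  ring

theorem formBound_fourierCoeff (f : C(AddCircle T, ℂ)) :
    FormBound (fun a c => fourierCoeff f (c - a)) ‖f‖ := by
  intro F u v
  rw [sum_sum_fourierCoeff_mul]
  set U : AddCircle T → ℂ := fun t => ∑ a ∈ F, u a * fourier a t
  set V : AddCircle T → ℂ := fun t => ∑ c ∈ F, conj (v c) * fourier c t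
  have hint {g : AddCircle T → ℝ} (hg : Continuous g) : Integrable g haarAddCircle :=
    hg.integrable_of_hasCompactSupport (HasCompactSupport.of_compactSpace _)
  have hU : Continuous U := by fun_prop
  have hV : Continuous V := by fun_prop
  calc ‖∫ t, f t * (U t * conj (V t)) ∂haarAddCircle‖
      ≤ ∫ t, ‖f‖ / 2 * (‖U t‖ ^ 2 + ‖V t‖ ^ 2) ∂haarAddCircle := by
        refine norm_integral_le_of_norm_le (hint (by fun_prop)) (.of_forall fun t => ?_)
        rw [norm_mul, norm_mul, RCLike.norm_conj]
        have hUV : ‖U t‖ * ‖V t‖ ≤ (‖U t‖ ^ 2 + ‖V t‖ ^ 2) / 2 := by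
          linarith [two_mul_le_add_sq ‖U t‖ ‖V t‖]
        calc ‖f t‖ * (‖U t‖ * ‖V t‖) ≤ ‖f‖ * ((‖U t‖ ^ 2 + ‖V t‖ ^ 2) / 2) := by
              gcongr
              exact f.norm_coe_le_norm t
          _ = ‖f‖ / 2 * (‖U t‖ ^ 2 + ‖V t‖ ^ 2) := by ring
    _ = ‖f‖ / 2 * (∑ a ∈ F, ‖u a‖ ^ 2 + ∑ c ∈ F, ‖v c‖ ^ 2) := by
        rw [integral_const_mul, integral_add (hint (by fun_prop)) (hint (by fun_prop)),
          integral_norm_sum_fourier_sq, integral_norm_sum_fourier_sq]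
        simp_rw [RCLike.norm_conj]

end Circle

theorem fact_two_pi_pos : Fact (0 < 2 * Real.pi) := ⟨Real.two_pi_pos⟩

attribute [local instance] fact_two_pi_pos

namespace FC

variable {f : FC} {A : ℝ}

theorem norm_eval_term (f : FC) (x : ℝ) (k : ℤ) :
    ‖f k * Complex.exp (Complex.I * k * x)‖ = ‖f k‖ := by
  have : Complex.I * k * x = (k * x : ℝ) * Complex.I := by
    push_cast
    ring
  rw [norm_mul, this, Complex.norm_exp_ofReal_mul_I, mul_one]

theorem hasSum_eval (hf : Summable fun k => ‖f k‖) (x : ℝ) :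
    HasSum (fun k : ℤ => f k * Complex.exp (Complex.I * k * x)) (eval f x) :=
  (Summable.of_norm (by simpa only [norm_eval_term] using hf)).hasSum

theorem norm_eval_le_linfty (hf : Summable fun k => ‖f k‖) (x : ℝ) : ‖eval f x‖ ≤ linfty f := by
  refine le_ciSup (f := fun x => ‖eval f x‖) ⟨∑' k, ‖f k‖, ?_⟩ x
  rintro _ ⟨y, rfl⟩
  refine tsum_of_norm_bounded hf.hasSum fun k => ?_
  rw [norm_eval_term]

theorem tsum_smul_fourier_apply (hf : Summable fun k => ‖f k‖) (x : ℝ) :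
    (∑' k, f k • fourier k : C(AddCircle (2 * Real.pi), ℂ)) x = eval f x := by
  refine (ContinuousMap.tsum_apply (summable_smul_fourier hf) _).symm.trans (tsum_congr fun k => ?_)
  rw [ContinuousMap.smul_apply, fourier_coe_apply, smul_eq_mul]
  congr 2
  push_cast
  field_simp

theorem norm_tsum_smul_fourier_le (hf : Summable fun k => ‖f k‖) (hA : ∀ x, ‖eval f x‖ ≤ A) :
    ‖(∑' k, f k • fourier k : C(AddCircle (2 * Real.pi), ℂ))‖ ≤ A := by
  refine (ContinuousMap.norm_le _ ((norm_nonneg _).trans (hA 0))).2 fun t => ?_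
  induction t using QuotientAddGroup.induction_on with
  | H x => exact (tsum_smul_fourier_apply hf x).symm ▸ hA x

theorem formBound_toeplitz (hf : Summable fun k => ‖f k‖) (hA : ∀ x, ‖eval f x‖ ≤ A) :
    FormBound (fun a c => f (c - a)) A := by
  intro F u v
  have h := formBound_fourierCoeff (∑' k, f k • fourier k : C(AddCircle (2 * Real.pi), ℂ)) F u v
  rw [fourierCoeff_tsum_smul_fourier hf] at h
  refine h.trans ?_
  gcongr
  exact norm_tsum_smul_fourier_le hf hA

theorem norm_apply_le (hf : Summable fun k => ‖f k‖) (hA : ∀ x, ‖eval f x‖ ≤ A) (n : ℤ) :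
    ‖f n‖ ≤ A := by
  set g : C(AddCircle (2 * Real.pi), ℂ) := ∑' k, f k • fourier k
  have hcoeff : fourierCoeff g n = f n := by rw [fourierCoeff_tsum_smul_fourier hf]
  have hle : ‖fourierCoeff g n‖ ≤ ‖g‖ := by
    refine (norm_integral_le_of_norm_le_const (C := ‖g‖) (.of_forall fun t => ?_)).trans_eq
      (by rw [probReal_univ, mul_one])
    rw [norm_smul, fourier_apply, Circle.norm_coe, one_mul]
    exact g.norm_coe_le_norm t
  exact hcoeff ▸ hle.trans (norm_tsum_smul_fourier_le hf hA)

end FC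

end Toeplitz

section Sobolev

open Filter Topology

namespace FC

variable {s t : ℝ} {θ : FC} {j k : ℤ}

theorem wt_pos (s : ℝ) (k : ℤ) : 0 < wt s k := by
  unfold wt
  positivity

theorem wt_neg (s : ℝ) (k : ℤ) : wt s (-k) = wt s k := by
  simp only [wt, Int.cast_neg, neg_sq]

theorem wt_zero_right (s : ℝ) : wt s 0 = 1 := by
  simp [wt]

theorem wt_add (s t : ℝ) (k : ℤ) : wt (s + t) k = wt s k * wt t k :=
  Real.rpow_add (by positivity) _ _

theorem wt_le_wt (hst : s ≤ t) (k : ℤ) : wt s k ≤ wt t k :=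
  Real.rpow_le_rpow_of_exponent_le (le_add_of_nonneg_right (sq_nonneg _)) hst

theorem wt_zero_left (k : ℤ) : wt 0 k = 1 :=
  Real.rpow_zero _

theorem one_le_wt (hs : 0 ≤ s) (k : ℤ) : 1 ≤ wt s k :=
  wt_zero_left k ▸ wt_le_wt hs k

theorem wt_half_sq (s : ℝ) (k : ℤ) : wt (s / 2) k ^ 2 = wt s k := by
  rw [sq, ← wt_add, add_halves]

theorem abs_le_wt_half (k : ℤ) : |(k : ℝ)| ≤ wt (1 / 2) k := by
  rw [wt, ← Real.sqrt_eq_rpow]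
  exact Real.abs_le_sqrt (by linarith)

theorem wt_add_right_le (hs : 0 ≤ s) (j k : ℤ) : wt s (j + k) ≤ 2 ^ s * wt s j * wt s k := by
  unfold wt
  rw [← Real.mul_rpow zero_le_two (by positivity),
    ← Real.mul_rpow (by positivity) (by positivity)]
  refine Real.rpow_le_rpow (by positivity) ?_ hs
  push_cast
  nlinarith [sq_nonneg ((j : ℝ) - k), sq_nonneg ((j : ℝ) * k)]

theorem summable_wt_neg_one : Summable (wt (-1)) := by
  have hpow := (Real.summable_one_div_int_pow (p := 2)).2 one_lt_two
  refine (hpow.add (hasSum_ite_eq (0 : ℤ) (1 : ℝ)).summable).of_nonneg_of_le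
    (fun k => (wt_pos _ k).le) fun k => ?_
  rcases eq_or_ne k 0 with rfl | hk
  · simp [wt]
  · rw [if_neg hk, add_zero, one_div, wt, Real.rpow_neg_one]
    have : (k : ℝ) ^ 2 ≠ 0 := by positivity
    gcongr
    linarith

/-- The modulus of the `k`-th Fourier coefficient of `(1 - ∂ₓ²)^(s/2) θ`. -/
def hsCoeff (s : ℝ) (θ : FC) (k : ℤ) : ℝ := wt (s / 2) k * ‖θ k‖

theorem hsCoeff_nonneg (s : ℝ) (θ : FC) (k : ℤ) : 0 ≤ hsCoeff s θ k :=
  mul_nonneg (wt_pos _ k).le (norm_nonneg _)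

theorem hsCoeff_sq (s : ℝ) (θ : FC) (k : ℤ) : hsCoeff s θ k ^ 2 = wt s k * ‖θ k‖ ^ 2 := by
  rw [hsCoeff, mul_pow, wt_half_sq]

theorem memHs.summable_hsCoeff_sq (hθ : memHs s θ) : Summable fun k => hsCoeff s θ k ^ 2 := by
  simp_rw [hsCoeff_sq]
  exact hθ

theorem hsNorm_nonneg (s : ℝ) (θ : FC) : 0 ≤ hsNorm s θ :=
  Real.sqrt_nonneg _

theorem hsNorm_sq (s : ℝ) (θ : FC) : hsNorm s θ ^ 2 = ∑' k, wt s k * ‖θ k‖ ^ 2 :=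
  Real.sq_sqrt (tsum_nonneg fun k => mul_nonneg (wt_pos s k).le (sq_nonneg _))

theorem tsum_hsCoeff_sq (s : ℝ) (θ : FC) : ∑' k, hsCoeff s θ k ^ 2 = hsNorm s θ ^ 2 := by
  simp_rw [hsNorm_sq, hsCoeff_sq]

theorem memHs.hsCoeff_le (hθ : memHs s θ) (k : ℤ) : hsCoeff s θ k ≤ hsNorm s θ := by
  refine le_of_sq_le_sq ?_ (hsNorm_nonneg s θ)
  rw [← tsum_hsCoeff_sq]
  exact hθ.summable_hsCoeff_sq.le_tsum k fun j _ => sq_nonneg _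

theorem memHs.summable_wt_mul_norm (hθ : memHs s θ) (hts : t ≤ (s - 1) / 2) :
    Summable fun k => wt t k * ‖θ k‖ := by
  refine ((summable_wt_neg_one.add hθ.summable_hsCoeff_sq).div_const 2).of_nonneg_of_le
    (fun k => mul_nonneg (wt_pos t k).le (norm_nonneg _)) fun k => ?_
  have hle : wt t k * ‖θ k‖ ≤ wt (-1 / 2) k * hsCoeff s θ k := by
    rw [hsCoeff, ← mul_assoc, ← wt_add]
    exact mul_le_mul_of_nonneg_right (wt_le_wt (by linarith) k) (norm_nonneg _)
  rw [← wt_half_sq (-1)]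
  linarith [two_mul_le_add_sq (wt (-1 / 2) k) (hsCoeff s θ k)]

end FC

theorem symbol_sq (s ε : ℝ) (k : ℤ) :
    symbol s ε k ^ 2 = FC.wt s k * ((1 + ε ^ 2 * (k : ℝ) ^ 2)⁻¹) ^ 2 := by
  rw [symbol, mul_pow, ← FC.wt_half_sq, FC.wt]

theorem symbol_le_wt (s ε : ℝ) (k : ℤ) : symbol s ε k ≤ FC.wt (s / 2) k :=
  mul_le_of_le_one_right (by positivity)
    (inv_le_one_of_one_le₀ (le_add_of_nonneg_right (by positivity)))

theorem symbol_le_inv_sq_mul_wt {s ε : ℝ} (hε0 : ε ≠ 0) (hε : ε ^ 2 ≤ 1) (k : ℤ) :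
    symbol s ε k ≤ (ε ^ 2)⁻¹ * FC.wt (s / 2 - 1) k := by
  have hwt : FC.wt (s / 2 - 1) k = FC.wt (s / 2) k * (1 + (k : ℝ) ^ 2)⁻¹ := by
    rw [sub_eq_add_neg, FC.wt_add, FC.wt, FC.wt, Real.rpow_neg_one]
  have hinv : (1 + ε ^ 2 * (k : ℝ) ^ 2)⁻¹ ≤ (ε ^ 2)⁻¹ * (1 + (k : ℝ) ^ 2)⁻¹ := by
    rw [← mul_inv]
    gcongr
    linarith
  calc symbol s ε k = FC.wt (s / 2) k * (1 + ε ^ 2 * (k : ℝ) ^ 2)⁻¹ := rfl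
    _ ≤ FC.wt (s / 2) k * ((ε ^ 2)⁻¹ * (1 + (k : ℝ) ^ 2)⁻¹) := by
      gcongr
      exact (FC.wt_pos _ k).le
    _ = (ε ^ 2)⁻¹ * FC.wt (s / 2 - 1) k := by rw [hwt]; ring

section Sums

variable {ι : Type*} {α : ι → ℝ} {u v : ℤ → ℝ}

/-- The shear `(i, k) ↦ (i, k + σ i)` of `ι × ℤ`. -/
def shear (σ : ι → ℤ) : ι × ℤ ≃ ι × ℤ :=
  Equiv.prodShear (.refl ι) fun i => Equiv.addRight (σ i)

theorem summable_and_tsum_mul_mul_shift_le (hα : Summable α) (hα0 : 0 ≤ α) (σ : ι → ℤ)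
    (hu : Summable fun k => u k ^ 2) (hv : Summable fun k => v k ^ 2) (hu0 : 0 ≤ u) (hv0 : 0 ≤ v) :
    Summable (fun q : ι × ℤ => α q.1 * (u q.2 * v (q.2 + σ q.1))) ∧
      ∑' q : ι × ℤ, α q.1 * (u q.2 * v (q.2 + σ q.1))
        ≤ (∑' i, α i) * ((∑' k, u k ^ 2 + ∑' k, v k ^ 2) / 2) := by
  have hsum {w : ℤ → ℝ} (hw : Summable fun k => w k ^ 2) :
      Summable fun q : ι × ℤ => α q.1 * w q.2 ^ 2 :=
    hα.mul_of_nonneg hw hα0 fun k => sq_nonneg _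
  have hsumv : Summable fun q : ι × ℤ => α q.1 * v (q.2 + σ q.1) ^ 2 :=
    (shear σ).summable_iff.2 (hsum hv)
  have htsumv : ∑' q : ι × ℤ, α q.1 * v (q.2 + σ q.1) ^ 2 = (∑' i, α i) * ∑' k, v k ^ 2 :=
    ((shear σ).tsum_eq fun q : ι × ℤ => α q.1 * v q.2 ^ 2).trans
      (hα.tsum_mul_tsum hv (hsum hv)).symm
  have hle (q : ι × ℤ) : α q.1 * (u q.2 * v (q.2 + σ q.1))
      ≤ (α q.1 * u q.2 ^ 2 + α q.1 * v (q.2 + σ q.1) ^ 2) / 2 := by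
    linarith [mul_le_mul_of_nonneg_left (two_mul_le_add_sq (u q.2) (v (q.2 + σ q.1))) (hα0 q.1)]
  have hdom := ((hsum hu).add hsumv).div_const 2
  have hS := hdom.of_nonneg_of_le
    (fun q => mul_nonneg (hα0 _) (mul_nonneg (hu0 _) (hv0 _))) hle
  refine ⟨hS, (hS.tsum_le_tsum hle hdom).trans_eq ?_⟩
  rw [tsum_div_const, (hsum hu).tsum_add hsumv, htsumv, ← hα.tsum_mul_tsum hu (hsum hu)]
  ring

theorem abs_tsum_le_of_forall_finset_square {f : ι × ι → ℝ} (hf : Summable f) {B : ℝ}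
    (hB : ∀ F : Finset ι, |∑ a ∈ F, ∑ c ∈ F, f (a, c)| ≤ B) : |∑' q, f q| ≤ B := by
  have hlim : Tendsto (fun F : Finset ι => ∑ q ∈ F ×ˢ F, f q) atTop (𝓝 (∑' q, f q)) :=
    hf.hasSum.comp (tendsto_finsetProd_atTop.comp tendsto_atTop_diagonal)
  exact le_of_tendsto hlim.abs (.of_forall fun F => (Finset.sum_product F F f).symm ▸ hB F)

end Sums

end Sobolev

section Triads

open Set

/-- The pairs `(a, c)` with `PosLT a c`, a fundamental domain (up to degenerate pairs) for the
action of `triadRotation` on `ℤ × ℤ`. -/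
def posLTSet : Set (ℤ × ℤ) := {q | PosLT q.1 q.2}

/-- Writing a triad of frequencies `a + b = c` as the pair `(a, c)`, this is the rotation
`(a, b, -c) ↦ (c, -a, -b)` of order six. -/
def triadRotation : ℤ × ℤ ≃ ℤ × ℤ where
  toFun q := (q.2, q.2 - q.1)
  invFun q := (q.1 - q.2, q.1)
  left_inv q := by simp
  right_inv q := by simp

/-- In the same encoding, the exchange of `a` and `b` in a triad `a + b = c`. -/
def triadReflection : ℤ × ℤ ≃ ℤ × ℤ where
  toFun q := (q.2 - q.1, q.2)
  invFun q := (q.2 - q.1, q.2)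
  left_inv q := by simp
  right_inv q := by simp

variable {f g : ℤ × ℤ → ℝ}

theorem tsum_eq_two_mul_tsum_posLTSet (hf : Summable f) (heven : ∀ q, f (-q) = f q)
    (hzero : ∀ q : ℤ × ℤ, q.1 = 0 ∨ q.2 = 0 ∨ q.1 = q.2 → f q = 0) :
    ∑' q, f q = 2 * ∑' q, posLTSet.indicator
      (fun q => f q + f (triadRotation q) + f (triadRotation.symm q)) q := by
  have hsum (e : ℤ × ℤ ≃ ℤ × ℤ) : HasSum (fun q => posLTSet.indicator (f ∘ e) (e.symm q))
      (∑' q, posLTSet.indicator (f ∘ e) q) :=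
    e.symm.hasSum_iff.2 ((e.summable_iff.2 hf).indicator _).hasSum
  have hthree := ((hsum (.refl _)).add (hsum triadRotation)).add (hsum triadRotation.symm)
  have hsix := hthree.add ((Equiv.neg _).hasSum_iff.2 hthree)
  have hdomain (e : ℤ × ℤ ≃ ℤ × ℤ) : HasSum (posLTSet.indicator (f ∘ e)) _ :=
    ((e.summable_iff.2 hf).indicator _).hasSum
  have htotal := ((hdomain (.refl _)).add (hdomain triadRotation)).add (hdomain triadRotation.symm)
  calc ∑' q, f q = _ := (tsum_congr fun q => ?_).trans hsix.tsum_eq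
    _ = 2 * _ := (two_mul _).symm
    _ = _ := by
      rw [← htotal.tsum_eq]
      congr 1
      refine tsum_congr fun q => ?_
      by_cases hq : q ∈ posLTSet <;>
        simp only [hq, not_false_eq_true, indicator_of_mem, indicator_of_notMem, add_zero,
          Function.comp_apply, Equiv.refl_apply]
  obtain ⟨a, c⟩ := q
  have hneg := heven (a, c)
  have h0 := hzero (a, c)
  simp only [Function.comp_apply, indicator, posLTSet, mem_ofPred_eq, Equiv.apply_symm_apply,
    Equiv.neg_apply, hneg]
  simp only [Equiv.refl_symm, Equiv.refl_apply, Equiv.symm_symm, triadRotation, Equiv.coe_fn_mk,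
    Equiv.coe_fn_symm_mk, PosLT, Prod.fst_neg, Prod.snd_neg]
  -- Unless it is degenerate, exactly one of the six images of `q` lies in `posLTSet`.
  grind

theorem triadReflection_mem_posLTSet {q : ℤ × ℤ} :
    triadReflection q ∈ posLTSet ↔ q ∈ posLTSet := by
  simp only [posLTSet, PosLT, triadReflection, Equiv.coe_fn_mk, mem_ofPred_eq]
  omega

theorem hasSum_posLTSet_add_comp_triadReflection (hg : Summable (posLTSet.indicator g)) :
    HasSum (posLTSet.indicator fun q => g q + g (triadReflection q))
      (2 * ∑' q, posLTSet.indicator g q) := by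
  rw [two_mul]
  refine (hg.hasSum.add (triadReflection.hasSum_iff.2 hg.hasSum)).congr_fun fun q => ?_
  have hmem := triadReflection_mem_posLTSet (q := q)
  by_cases hq : q ∈ posLTSet
  · rw [Function.comp_apply, indicator_of_mem hq, indicator_of_mem hq,
      indicator_of_mem (hmem.2 hq)]
  · rw [Function.comp_apply, indicator_of_notMem hq, indicator_of_notMem hq,
      indicator_of_notMem (hmem.not.2 hq), add_zero]

theorem tsum_posLTSet_eq_of_symmetrization_eq (hf : Summable (posLTSet.indicator f))
    (hg : Summable (posLTSet.indicator g))
    (hfg : ∀ q ∈ posLTSet, f q + f (triadReflection q) = g q + g (triadReflection q)) :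
    ∑' q, posLTSet.indicator f q = ∑' q, posLTSet.indicator g q := by
  have h := hasSum_posLTSet_add_comp_triadReflection hf
  rw [indicator_congr hfg] at h
  linarith [h.unique (hasSum_posLTSet_add_comp_triadReflection hg)]

end Triads

section Transport

open Set ComplexConjugate

namespace FC

variable {s : ℝ} {θ : FC}

theorem norm_D1_le_wt_half_mul (c : FC) (k : ℤ) : ‖D1 c k‖ ≤ wt (1 / 2) k * ‖c k‖ := by
  rw [D1, norm_mul, norm_mul, Complex.norm_I, one_mul, Complex.norm_intCast]
  exact mul_le_mul_of_nonneg_right (abs_le_wt_half k) (norm_nonneg _)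

theorem memHs.summable_norm_D1 (hs : 2 ≤ s) (hθ : memHs s θ) : Summable fun k => ‖D1 θ k‖ :=
  (hθ.summable_wt_mul_norm (t := 1 / 2) (by linarith)).of_nonneg_of_le
    (fun k => norm_nonneg _) fun k => norm_D1_le_wt_half_mul θ k

theorem norm_hilbert_le (θ : FC) (k : ℤ) : ‖hilbert θ k‖ ≤ ‖θ k‖ := by
  rw [hilbert, norm_mul, norm_mul, norm_neg, Complex.norm_I, one_mul, Complex.norm_intCast]
  refine mul_le_of_le_one_left (norm_nonneg _) ?_
  rcases lt_trichotomy k 0 with hk | rfl | hk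
  · simp [Int.sign_eq_neg_one_of_neg hk]
  · simp
  · simp [Int.sign_eq_one_of_pos hk]

/-- The average of `‖∂ₓθ‖_{L^∞}` and `‖𝓗∂ₓθ‖_{L^∞}`, which controls the two halves of the
spectrum of `∂ₓθ` separately. -/
def gradNorm (θ : FC) : ℝ := (linfty (D1 θ) + linfty (hilbert (D1 θ))) / 2

/-- The positive-frequency part of `-i∂ₓθ`. -/
def posGrad (θ : FC) : FC := fun k => if 0 < k then k * θ k else 0

theorem posGrad_eq (θ : FC) (k : ℤ) :
    posGrad θ k = 1 / 2 * hilbert (D1 θ) k - Complex.I / 2 * D1 θ k := by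
  rw [posGrad, hilbert, D1]
  rcases lt_trichotomy k 0 with hk | rfl | hk
  · rw [if_neg hk.not_gt, Int.sign_eq_neg_one_of_neg hk]
    push_cast
    ring
  · simp
  · rw [if_pos hk, Int.sign_eq_one_of_pos hk]
    push_cast
    linear_combination (k * θ k) * Complex.I_mul_I

theorem summable_norm_posGrad (hθ : Summable fun k => ‖D1 θ k‖) :
    Summable fun k => ‖posGrad θ k‖ := by
  refine hθ.of_nonneg_of_le (fun k => norm_nonneg _) fun k => ?_
  rw [posGrad, D1]
  split_ifs <;> simp [mul_nonneg]

theorem norm_eval_posGrad_le (hθ : Summable fun k => ‖D1 θ k‖) (x : ℝ) :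
    ‖eval (posGrad θ) x‖ ≤ gradNorm θ := by
  have hhilbert : Summable fun k => ‖hilbert (D1 θ) k‖ :=
    hθ.of_nonneg_of_le (fun k => norm_nonneg _) (norm_hilbert_le _)
  have heval : eval (posGrad θ) x
      = 1 / 2 * eval (hilbert (D1 θ)) x - Complex.I / 2 * eval (D1 θ) x := by
    refine (hasSum_eval (summable_norm_posGrad hθ) x).unique <|
      (((hasSum_eval hhilbert x).mul_left (1 / 2)).sub
        ((hasSum_eval hθ x).mul_left (Complex.I / 2))).congr_fun fun k => ?_
    rw [posGrad_eq]
    ring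
  have hhalf : ‖(1 / 2 : ℂ)‖ = 1 / 2 ∧ ‖Complex.I / 2‖ = 1 / 2 := by norm_num
  calc ‖eval (posGrad θ) x‖
      ≤ 1 / 2 * ‖eval (hilbert (D1 θ)) x‖ + 1 / 2 * ‖eval (D1 θ) x‖ := by
        refine heval ▸ (norm_sub_le _ _).trans_eq ?_
        rw [norm_mul, norm_mul, hhalf.1, hhalf.2]
    _ ≤ 1 / 2 * linfty (hilbert (D1 θ)) + 1 / 2 * linfty (D1 θ) := by
        gcongr <;> exact norm_eval_le_linfty ‹_› x
    _ = gradNorm θ := by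
        rw [gradNorm]
        ring

theorem gradNorm_nonneg (hθ : Summable fun k => ‖D1 θ k‖) : 0 ≤ gradNorm θ :=
  (norm_nonneg _).trans (norm_eval_posGrad_le hθ 0)

theorem isReal.norm_neg (hr : isReal θ) (k : ℤ) : ‖θ (-k)‖ = ‖θ k‖ := by
  rw [hr, RCLike.norm_conj]

theorem isReal.abs_mul_norm_le_gradNorm (hr : isReal θ) (hθ : Summable fun k => ‖D1 θ k‖) (k : ℤ) :
    |(k : ℝ)| * ‖θ k‖ ≤ gradNorm θ := by
  have hpos {j : ℤ} (hj : 0 < j) : |(j : ℝ)| * ‖θ j‖ ≤ gradNorm θ := by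
    have := norm_apply_le (summable_norm_posGrad hθ) (norm_eval_posGrad_le hθ) j
    rwa [posGrad, if_pos hj, norm_mul, Complex.norm_intCast] at this
  rcases lt_trichotomy k 0 with hk | rfl | hk
  · simpa [hr.norm_neg] using hpos (neg_pos.2 hk)
  · simpa using gradNorm_nonneg hθ
  · exact hpos hk

/-- The coefficient of the triad `a + b = c`, encoded as the pair `(a, c)`, in the integral of the
cube of `θ`. -/
def triad (θ : FC) (q : ℤ × ℤ) : ℂ := θ q.1 * θ (q.2 - q.1) * conj (θ q.2)

theorem triad_comp_triadReflection (θ : FC) (q : ℤ × ℤ) :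
    triad θ (triadReflection q) = triad θ q := by
  simp only [triad, triadReflection, Equiv.coe_fn_mk, sub_sub_cancel]
  ring

theorem isReal.triad_neg_re (hr : isReal θ) (q : ℤ × ℤ) :
    (triad θ (-q)).re = (triad θ q).re := by
  have h : triad θ (-q) = conj (triad θ q) := by
    simp only [triad, Prod.fst_neg, Prod.snd_neg, ← neg_sub', hr _, map_mul]
  rw [h, Complex.conj_re]

theorem isReal.triad_triadRotation (hr : isReal θ) (q : ℤ × ℤ) :
    (triad θ (triadRotation q)).re = (triad θ q).re := by
  have h : triad θ (triadRotation q) = conj (triad θ q) := by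
    have hneg : q.2 - q.1 - q.2 = -q.1 := by ring
    simp only [triad, triadRotation, Equiv.coe_fn_mk, hneg, hr _, map_mul, Complex.conj_conj]
    ring
  rw [h, Complex.conj_re]

theorem isReal.triad_triadRotation_symm (hr : isReal θ) (q : ℤ × ℤ) :
    (triad θ (triadRotation.symm q)).re = (triad θ q).re := by
  rw [← hr.triad_triadRotation, Equiv.apply_symm_apply]

/-- The contribution of the triad `q` to `-Σ_c m_c² ((𝓗θ) ∂ₓθ)^(c) conj(θ̂ c)`, up to sign, where
`m` is the symbol of `(1 - ∂ₓ²)^(s/2) T̃_ε`. -/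
def transportTerm (s ε : ℝ) (θ : FC) (q : ℤ × ℤ) : ℂ :=
  ((symbol s ε q.2 ^ 2 * (Int.sign q.1 * (q.2 - q.1)) : ℝ) : ℂ) * triad θ q

theorem symbol_add_sq_mul_abs_le {ε : ℝ} (hs : 2 ≤ s) (hε0 : ε ≠ 0) (hε : ε ^ 2 ≤ 1) (k i : ℤ) :
    symbol s ε (k + i : ℤ) ^ 2 * |(k : ℝ)| ≤ (ε ^ 2)⁻¹ * 2 ^ (s / 2 - 1)
      * (wt (s / 2 - 1) i * (wt (s / 2) k * wt (s / 2) (k + i))) := by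
  have := wt_pos (s / 2 - 1) k
  have := wt_pos (s / 2 - 1) i
  have := wt_pos (s / 2) (k + i)
  have hk : |(k : ℝ)| * wt (s / 2 - 1) k ≤ wt (s / 2) k := by
    calc |(k : ℝ)| * wt (s / 2 - 1) k ≤ wt (1 / 2) k * wt (s / 2 - 1) k := by
          gcongr
          exact abs_le_wt_half k
      _ ≤ wt (s / 2) k := wt_add (1 / 2) _ k ▸ wt_le_wt (by linarith) k
  have hsymbol : symbol s ε (k + i : ℤ)
      ≤ (ε ^ 2)⁻¹ * (2 ^ (s / 2 - 1) * wt (s / 2 - 1) k * wt (s / 2 - 1) i) := by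
    refine (symbol_le_inv_sq_mul_wt hε0 hε _).trans ?_
    gcongr
    exact wt_add_right_le (by linarith) k i
  calc symbol s ε (k + i : ℤ) ^ 2 * |(k : ℝ)|
      ≤ (ε ^ 2)⁻¹ * (2 ^ (s / 2 - 1) * wt (s / 2 - 1) k * wt (s / 2 - 1) i) * wt (s / 2) (k + i)
        * |(k : ℝ)| := by
        rw [sq]
        gcongr
        exacts [(symbol_pos ..).le, symbol_le_wt ..]
    _ = (ε ^ 2)⁻¹ * 2 ^ (s / 2 - 1)
        * (wt (s / 2 - 1) i * (|(k : ℝ)| * wt (s / 2 - 1) k * wt (s / 2) (k + i))) := by ring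
    _ ≤ _ := by gcongr

theorem transportTerm_re (s ε : ℝ) (θ : FC) (q : ℤ × ℤ) : (transportTerm s ε θ q).re
    = symbol s ε q.2 ^ 2 * (Int.sign q.1 * (q.2 - q.1)) * (triad θ q).re :=
  Complex.re_ofReal_mul _ _

theorem memHs.summable_symbol_sq_mul_abs_mul_norm_triad {ε : ℝ} (hs : 2 ≤ s) (hε0 : ε ≠ 0)
    (hε : ε ^ 2 ≤ 1) (hθ : memHs s θ) : Summable fun q : ℤ × ℤ =>
      symbol s ε q.2 ^ 2 * (|(q.1 : ℝ)| + |(q.2 - q.1 : ℝ)|) * ‖triad θ q‖ := by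
  have hw := hθ.summable_hsCoeff_sq
  have hα := hθ.summable_wt_mul_norm (t := s / 2 - 1) (by linarith)
  have hdom := ((summable_and_tsum_mul_mul_shift_le hα
    (fun i => mul_nonneg (wt_pos _ i).le (norm_nonneg _)) id hw hw
    (hsCoeff_nonneg s θ) (hsCoeff_nonneg s θ)).1.mul_left ((ε ^ 2)⁻¹ * 2 ^ (s / 2 - 1)))
  have hshear : Summable fun q : ℤ × ℤ =>
      symbol s ε q.2 ^ 2 * |(q.2 - q.1 : ℝ)| * ‖triad θ q‖ := by
    rw [← (shear id).summable_iff]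
    refine hdom.of_nonneg_of_le (fun q => mul_nonneg (by positivity) (norm_nonneg _)) ?_
    rintro ⟨i, k⟩
    have hnorm : ‖triad θ (i, k + i)‖ = ‖θ i‖ * ‖θ k‖ * ‖θ (k + i)‖ := by
      rw [triad, norm_mul, norm_mul, RCLike.norm_conj, add_sub_cancel_right]
    have hsub : ((k + i : ℤ) - i : ℝ) = k := by
      push_cast
      ring
    simp only [Function.comp_apply, shear, Equiv.prodShear_apply, Equiv.refl_apply, id,
      Equiv.coe_addRight, hnorm, hsub, hsCoeff]
    calc symbol s ε (k + i : ℤ) ^ 2 * |(k : ℝ)| * (‖θ i‖ * ‖θ k‖ * ‖θ (k + i)‖)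
        ≤ (ε ^ 2)⁻¹ * 2 ^ (s / 2 - 1) * (wt (s / 2 - 1) i * (wt (s / 2) k * wt (s / 2) (k + i)))
          * (‖θ i‖ * ‖θ k‖ * ‖θ (k + i)‖) :=
          mul_le_mul_of_nonneg_right (symbol_add_sq_mul_abs_le hs hε0 hε k i) (by positivity)
      _ = _ := by ring
  refine ((triadReflection.summable_iff.2 hshear).add hshear).congr fun q => ?_
  rw [Function.comp_apply, triad_comp_triadReflection]
  simp only [triadReflection, Equiv.coe_fn_mk]
  push_cast
  rw [sub_sub_cancel]
  ring

theorem memHs.summable_transportTerm {ε : ℝ} (hs : 2 ≤ s) (hε0 : ε ≠ 0) (hε : ε ^ 2 ≤ 1)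
    (hθ : memHs s θ) : Summable (transportTerm s ε θ) := by
  refine .of_norm_bounded (hθ.summable_symbol_sq_mul_abs_mul_norm_triad hs hε0 hε) fun q => ?_
  have hsign : |(Int.sign q.1 : ℝ)| ≤ 1 := by
    rcases Int.sign_trichotomy q.1 with h | h | h <;> simp [h]
  rw [transportTerm, norm_mul, Complex.norm_real, Real.norm_eq_abs, abs_mul, abs_mul, abs_sq]
  gcongr
  exact (mul_le_of_le_one_left (abs_nonneg _) hsign).trans (le_add_of_nonneg_left (abs_nonneg _))

theorem memHs.hasSum_mul_hilbert_D1 {ε : ℝ} (hs : 2 ≤ s) (hε0 : ε ≠ 0) (hε : ε ^ 2 ≤ 1)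
    (hθ : memHs s θ) : HasSum
      (fun c : ℤ => ((symbol s ε c ^ 2 : ℝ) : ℂ) * (mul (hilbert θ) (D1 θ) c * conj (θ c)))
      (∑' q, transportTerm s ε θ q) := by
  have hsum := (Equiv.prodComm ℤ ℤ).summable_iff.2 (hθ.summable_transportTerm hs hε0 hε)
  rw [← (Equiv.prodComm ℤ ℤ).tsum_eq (transportTerm s ε θ)]
  refine (hsum.hasSum.prod_fiberwise fun c => (hsum.prod_factor c).hasSum).congr_fun fun c => ?_
  rw [mul, ← tsum_mul_right, ← tsum_mul_left]
  refine tsum_congr fun a => ?_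
  simp only [Function.comp_apply, Equiv.prodComm_apply, Prod.swap_prod_mk, transportTerm, triad,
    hilbert, D1]
  push_cast
  linear_combination -(symbol s ε c ^ 2 * Int.sign a * (c - a) * θ a * θ (c - a) * conj (θ c) : ℂ)
    * Complex.I_mul_I

end FC

end Transport

section TransportBound

open Set ComplexConjugate

theorem FormBound.ite_left {α : Type*} {M : α → α → ℂ} {B : ℝ} (hM : FormBound M B) (hB : 0 ≤ B)
    (p : α → Prop) [DecidablePred p] : FormBound (fun a c => if p a then M a c else 0) B := by
  intro F u v
  calc ‖∑ a ∈ F, ∑ c ∈ F, (if p a then M a c else 0) * (u a * v c)‖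
      = ‖∑ a ∈ F, ∑ c ∈ F, M a c * ((if p a then u a else 0) * v c)‖ := by
        simp only [ite_mul, mul_ite, zero_mul, mul_zero]
    _ ≤ _ := hM F _ v
    _ ≤ _ := by
      gcongr with a
      split_ifs <;> simp

namespace FC

variable {s ε A : ℝ} {θ : FC}

theorem memHs.sum_symbol_mul_norm_sq_le (hθ : memHs s θ) (ε : ℝ) (F : Finset ℤ) :
    ∑ k ∈ F, (symbol s ε k * ‖θ k‖) ^ 2 ≤ hsNorm s θ ^ 2 := by
  rw [← tsum_hsCoeff_sq]
  refine (Finset.sum_le_sum fun k _ => ?_).trans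
    (hθ.summable_hsCoeff_sq.sum_le_tsum F fun k _ => sq_nonneg _)
  have := (symbol_pos s ε k).le
  rw [hsCoeff]
  gcongr
  exact symbol_le_wt s ε k

theorem abs_tsum_mean_transportTerm_le (hs : 2 ≤ s) (hθ : memHs s θ) (hr : isReal θ) :
    |∑' a : ℤ, |(a : ℝ)| * (triad θ (a, 0)).re|
      ≤ (∑' k, wt (-1) k) * gradNorm θ * hsNorm s θ ^ 2 := by
  have hD1 := hθ.summable_norm_D1 hs
  have hH := hsNorm_nonneg s θ
  have hmean : ‖θ 0‖ ≤ hsNorm s θ := by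
    simpa only [hsCoeff, wt_zero_right, one_mul] using hθ.hsCoeff_le 0
  have hdecay (a : ℤ) : ‖θ a‖ ≤ wt (-1) a * hsNorm s θ := by
    calc ‖θ a‖ = wt (-1) a * (wt 1 a * ‖θ a‖) := by
          rw [← mul_assoc, ← wt_add, neg_add_cancel, wt_zero_left, one_mul]
      _ ≤ wt (-1) a * (wt (s / 2) a * ‖θ a‖) := by
          have := wt_le_wt (s := 1) (t := s / 2) (by linarith) a
          have := (wt_pos (-1) a).le
          gcongr
      _ ≤ wt (-1) a * hsNorm s θ := by
          gcongr
          exacts [(wt_pos _ a).le, hθ.hsCoeff_le a]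
  have hle (a : ℤ) : ‖|(a : ℝ)| * (triad θ (a, 0)).re‖
      ≤ wt (-1) a * (gradNorm θ * hsNorm s θ ^ 2) := by
    calc ‖|(a : ℝ)| * (triad θ (a, 0)).re‖ ≤ |(a : ℝ)| * ‖triad θ (a, 0)‖ := by
          rw [norm_mul, Real.norm_eq_abs, abs_abs]
          gcongr
          exact Complex.abs_re_le_norm _
      _ = |(a : ℝ)| * ‖θ a‖ * ‖θ a‖ * ‖θ 0‖ := by
          rw [triad, norm_mul, norm_mul, RCLike.norm_conj, zero_sub, hr.norm_neg]
          ring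
      _ ≤ gradNorm θ * (wt (-1) a * hsNorm s θ) * hsNorm s θ := by
          have := gradNorm_nonneg hD1
          have := wt_pos (-1) a
          gcongr
          exacts [hr.abs_mul_norm_le_gradNorm hD1 a, hdecay a]
      _ = _ := by ring
  refine (tsum_of_norm_bounded (summable_wt_neg_one.mul_right _).hasSum hle).trans_eq ?_
  rw [tsum_mul_right, mul_assoc]

/-- The symmetrized form of `transportTerm` on `posLTSet`, in which the polynomial `P` distributes
the weight of the largest frequency between the two smaller ones. -/
def symmTransportTerm (P : Polynomial ℝ) (s ε : ℝ) (θ : FC) (q : ℤ × ℤ) : ℝ :=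
  (P.eval ((q.1 : ℝ) / q.2) * q.2 * symbol s ε q.2 ^ 2
    - (2 * q.2 - q.1) * symbol s ε q.1 ^ 2) * (triad θ q).re

theorem memHs.summable_symmTransportTerm (hs : 2 ≤ s) (hε0 : ε ≠ 0) (hε : ε ^ 2 ≤ 1)
    (hθ : memHs s θ) (P : Polynomial ℝ) :
    Summable (posLTSet.indicator (symmTransportTerm P s ε θ)) := by
  obtain ⟨K, hK⟩ := isCompact_Icc.exists_bound_of_continuousOn (s := Icc (0 : ℝ) 1)
    P.continuous.continuousOn
  refine .of_norm_bounded
    ((hθ.summable_symbol_sq_mul_abs_mul_norm_triad hs hε0 hε).mul_left (K + 2)) ?_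
  rintro ⟨a, c⟩
  have hK0 : 0 ≤ K := (norm_nonneg _).trans (hK 0 (by norm_num))
  by_cases hq : (a, c) ∈ posLTSet
  · obtain ⟨ha, hac⟩ := PosLT.cast hq
    have hc : (0 : ℝ) < c := ha.trans hac
    have hmono : symbol s ε a ^ 2 ≤ symbol s ε c ^ 2 :=
      pow_le_pow_left₀ (symbol_pos s ε a).le (symbol_le_symbol hs hε ha.le hac.le) 2
    have hP : |P.eval ((a : ℝ) / c)| ≤ K := hK _ ⟨by positivity, (div_le_one hc).2 hac.le⟩
    rw [indicator_of_mem hq, symmTransportTerm, norm_mul, abs_of_pos ha, abs_of_pos (sub_pos.2 hac)]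
    calc ‖P.eval ((a : ℝ) / c) * c * symbol s ε c ^ 2 - (2 * c - a) * symbol s ε a ^ 2‖
          * ‖(triad θ (a, c)).re‖
        ≤ (K * c * symbol s ε c ^ 2 + 2 * c * symbol s ε c ^ 2) * ‖triad θ (a, c)‖ := by
          gcongr
          · refine (norm_sub_le _ _).trans (add_le_add ?_ ?_)
            · rw [norm_mul, norm_mul, Real.norm_eq_abs, Real.norm_of_nonneg hc.le,
                Real.norm_of_nonneg (sq_nonneg _)]
              gcongr
            · rw [norm_mul, Real.norm_of_nonneg (by linarith), Real.norm_of_nonneg (sq_nonneg _)]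
              gcongr
              linarith
          · exact Complex.abs_re_le_norm _
      _ = _ := by ring
  · rw [indicator_of_notMem hq, norm_zero]
    exact mul_nonneg (by linarith) (mul_nonneg (by positivity) (norm_nonneg _))

/-- The sum of `transportTerm` over the orbit of `q` under `triadRotation`, up to `q ↦ -q`. -/
def transportOrbitSum (s ε : ℝ) (θ : FC) (q : ℤ × ℤ) : ℝ :=
  ((q.2 - q.1) * symbol s ε q.2 ^ 2 - q.1 * symbol s ε (q.2 - q.1) ^ 2
    - q.2 * symbol s ε q.1 ^ 2) * (triad θ q).re

theorem isReal.transportTerm_re_add_triadRotation (hr : isReal θ) {q : ℤ × ℤ}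
    (hq : q ∈ posLTSet) :
    (transportTerm s ε θ q).re + (transportTerm s ε θ (triadRotation q)).re
        + (transportTerm s ε θ (triadRotation.symm q)).re
      = transportOrbitSum s ε θ q := by
  simp only [transportOrbitSum, transportTerm_re, hr.triad_triadRotation,
    hr.triad_triadRotation_symm]
  obtain ⟨a, c⟩ := q
  obtain ⟨ha : 0 < a, hac : a < c⟩ := hq
  simp only [triadRotation, Equiv.coe_fn_mk, Equiv.coe_fn_symm_mk, Int.sign_eq_one_of_pos ha,
    Int.sign_eq_one_of_pos (ha.trans hac), Int.sign_eq_neg_one_of_neg (sub_neg.2 hac)]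
  push_cast
  ring

theorem symmTransportTerm_add_triadReflection {P : Polynomial ℝ}
    (hP : ∀ x, P.eval x + P.eval (1 - x) = 1) {q : ℤ × ℤ} (hq : q ∈ posLTSet) :
    symmTransportTerm P s ε θ q + symmTransportTerm P s ε θ (triadReflection q)
      = transportOrbitSum s ε θ q + transportOrbitSum s ε θ (triadReflection q) := by
  obtain ⟨a, c⟩ := q
  have hc : (c : ℝ) ≠ 0 := by
    obtain ⟨ha, hac⟩ := PosLT.cast hq
    linarith
  have hsub : ((c : ℝ) - a) / c = 1 - a / c := by
    field_simp
  simp only [symmTransportTerm, transportOrbitSum, triad_comp_triadReflection]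
  simp only [triadReflection, Equiv.coe_fn_mk]
  push_cast
  rw [hsub, sub_sub_cancel]
  linear_combination (c * symbol s ε c ^ 2 * (triad θ (a, c)).re) * hP (a / c)

theorem tsum_transportTerm_re_mean (s ε : ℝ) (θ : FC) :
    ∑' q, {q : ℤ × ℤ | q.2 = 0}.indicator (fun q => (transportTerm s ε θ q).re) q
      = -∑' a : ℤ, |(a : ℝ)| * (triad θ (a, 0)).re := by
  rw [← tsum_neg, ← (Prod.mk_left_injective (0 : ℤ)).tsum_eq]
  · refine tsum_congr fun a => ?_
    have hsign : (Int.sign a * a : ℝ) = |(a : ℝ)| := by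
      exact_mod_cast Int.sign_mul_self_eq_abs a
    rw [indicator_of_mem (by exact rfl), transportTerm_re, ← hsign]
    simp [symbol]
  · rintro ⟨a, c⟩ hac
    obtain rfl : c = 0 := (indicator_apply_ne_zero.1 hac).1
    exact ⟨a, rfl⟩

/-- The real part of `transportTerm` without the triads `a + b = 0`, which give the mean of
`(𝓗θ) ∂ₓθ` and are not cancelled by the rotations. -/
def meanFreeTransportTerm (s ε : ℝ) (θ : FC) : ℤ × ℤ → ℝ :=
  {q : ℤ × ℤ | q.2 = 0}ᶜ.indicator fun q => (transportTerm s ε θ q).re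

theorem meanFreeTransportTerm_of_ne_zero {q : ℤ × ℤ} (hq : q.2 ≠ 0) :
    meanFreeTransportTerm s ε θ q = (transportTerm s ε θ q).re :=
  indicator_of_mem hq _

theorem meanFreeTransportTerm_eq_zero {q : ℤ × ℤ} (hq : q.1 = 0 ∨ q.2 = 0 ∨ q.1 = q.2) :
    meanFreeTransportTerm s ε θ q = 0 := by
  rw [meanFreeTransportTerm, indicator_apply_eq_zero]
  intro hmem
  rcases hq with h | h | h
  · simp [transportTerm_re, h]
  · exact absurd h hmem
  · simp [transportTerm_re, h]

theorem isReal.meanFreeTransportTerm_neg (hr : isReal θ) (s ε : ℝ) (q : ℤ × ℤ) :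
    meanFreeTransportTerm s ε θ (-q) = meanFreeTransportTerm s ε θ q := by
  by_cases hq : q.2 = 0
  · rw [meanFreeTransportTerm_eq_zero (.inr (.inl hq)),
      meanFreeTransportTerm_eq_zero (.inr (.inl (neg_eq_zero.2 hq)))]
  · rw [meanFreeTransportTerm_of_ne_zero hq, meanFreeTransportTerm_of_ne_zero (neg_ne_zero.2 hq)]
    simp only [transportTerm_re, hr.triad_neg_re, Prod.fst_neg, Prod.snd_neg, Int.sign_neg]
    push_cast
    rw [symbol_neg]
    ring

theorem isReal.meanFreeTransportTerm_add_triadRotation (hr : isReal θ) {q : ℤ × ℤ}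
    (hq : q ∈ posLTSet) :
    meanFreeTransportTerm s ε θ q + meanFreeTransportTerm s ε θ (triadRotation q)
        + meanFreeTransportTerm s ε θ (triadRotation.symm q)
      = transportOrbitSum s ε θ q := by
  rw [← hr.transportTerm_re_add_triadRotation hq,
    meanFreeTransportTerm_of_ne_zero (hq.1.trans hq.2).ne',
    meanFreeTransportTerm_of_ne_zero (q := triadRotation q) (sub_pos.2 hq.2).ne',
    meanFreeTransportTerm_of_ne_zero (q := triadRotation.symm q) hq.1.ne']

theorem memHs.tsum_transportTerm_re (hs : 2 ≤ s) (hε0 : ε ≠ 0) (hε : ε ^ 2 ≤ 1) (hθ : memHs s θ)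
    (hr : isReal θ) {P : Polynomial ℝ} (hP : ∀ x, P.eval x + P.eval (1 - x) = 1) :
    (∑' q, transportTerm s ε θ q).re = -∑' a : ℤ, |(a : ℝ)| * (triad θ (a, 0)).re
      + 2 * ∑' q, posLTSet.indicator (symmTransportTerm P s ε θ) q := by
  have hre : HasSum (fun q => (transportTerm s ε θ q).re) (∑' q, transportTerm s ε θ q).re :=
    (hθ.summable_transportTerm hs hε0 hε).hasSum.mapL Complex.reCLM
  have hsum : Summable (meanFreeTransportTerm s ε θ) := hre.summable.indicator _
  have horbit := (hsum.add (triadRotation.summable_iff.2 hsum)).add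
    (triadRotation.symm.summable_iff.2 hsum)
  have hsymm := tsum_posLTSet_eq_of_symmetrization_eq (horbit.indicator _)
    (hθ.summable_symmTransportTerm hs hε0 hε P) fun q hq => by
      rw [symmTransportTerm_add_triadReflection hP hq]
      exact congrArg₂ _ (hr.meanFreeTransportTerm_add_triadRotation hq)
        (hr.meanFreeTransportTerm_add_triadRotation (triadReflection_mem_posLTSet.2 hq))
  have hfold := tsum_eq_two_mul_tsum_posLTSet hsum (hr.meanFreeTransportTerm_neg s ε)
    fun q => meanFreeTransportTerm_eq_zero
  rw [← hre.tsum_eq, ← tsum_transportTerm_re_mean, ← hsymm]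
  refine Eq.trans ?_ (((hre.summable.indicator _).tsum_add hsum).trans (congrArg _ hfold))
  exact tsum_congr fun q => by
    rw [meanFreeTransportTerm, ← Pi.add_apply, indicator_self_add_compl]

theorem ite_posGrad_eq_zero {a c : ℤ} (hac : ¬PosLT a c) :
    (if 0 < a then posGrad θ (c - a) else 0) = 0 := by
  rw [PosLT, not_and] at hac
  rw [posGrad]
  split_ifs with ha hc
  exacts [absurd (sub_pos.1 hc) (hac ha), rfl, rfl]

theorem indicator_symmTransportTerm_eq_re (P : Polynomial ℝ) (a c : ℤ) :
    posLTSet.indicator (symmTransportTerm P s ε θ) (a, c)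
      = (((P.eval ((a : ℝ) / c) * c * symbol s ε c ^ 2 - (2 * c - a) * symbol s ε a ^ 2)
        / ((c - a) * (symbol s ε a * symbol s ε c)) : ℝ)
        * (if 0 < a then posGrad θ (c - a) else 0)
        * (symbol s ε a * θ a * (symbol s ε c * conj (θ c))) : ℂ).re := by
  by_cases hac : PosLT a c
  · have hca : (c - a : ℝ) ≠ 0 := (sub_pos.2 hac.cast.2).ne'
    have ha := (symbol_pos s ε a).ne'
    have hc := (symbol_pos s ε c).ne'
    rw [indicator_of_mem (by exact hac), if_pos hac.1, posGrad, if_pos (sub_pos.2 hac.2),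
      symmTransportTerm, ← Complex.re_ofReal_mul, triad]
    dsimp only
    set X : ℝ := P.eval ((a : ℝ) / c) * c * symbol s ε c ^ 2 - (2 * c - a) * symbol s ε a ^ 2
    have hX : X = X / ((c - a) * (symbol s ε a * symbol s ε c)) * (c - a) * symbol s ε a
        * symbol s ε c := by
      field_simp
    conv_lhs => rw [hX]
    push_cast
    ring_nf
  · rw [indicator_of_notMem (by exact hac), ite_posGrad_eq_zero hac, mul_zero, zero_mul,
      Complex.zero_re]

theorem memHs.abs_tsum_symmTransportTerm_le (hs : 2 ≤ s) (hε0 : ε ≠ 0) (hε : ε ^ 2 ≤ 1)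
    (hθ : memHs s θ) {C : ℝ} {P : Polynomial ℝ} (hP : IsSchurMultiplier PosLT C fun a c =>
      (P.eval ((a : ℝ) / c) * c * symbol s ε c ^ 2 - (2 * c - a) * symbol s ε a ^ 2)
        / ((c - a) * (symbol s ε a * symbol s ε c))) :
    |∑' q, posLTSet.indicator (symmTransportTerm P s ε θ) q|
      ≤ C * gradNorm θ * hsNorm s θ ^ 2 := by
  have hD1 := hθ.summable_norm_D1 hs
  have hA := gradNorm_nonneg hD1
  refine abs_tsum_le_of_forall_finset_square (hθ.summable_symmTransportTerm hs hε0 hε P) fun F => ?_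
  have hM := hP.formBound _ _ hA (fun a c => ite_posGrad_eq_zero)
    ((formBound_toeplitz (summable_norm_posGrad hD1) (norm_eval_posGrad_le hD1)).ite_left hA
      fun a => 0 < a) F (fun k => symbol s ε k * θ k) (fun k => symbol s ε k * conj (θ k))
  simp only [norm_mul, Complex.norm_real, RCLike.norm_conj,
    Real.norm_of_nonneg (symbol_pos s ε _).le] at hM
  simp only [indicator_symmTransportTerm_eq_re, ← Complex.re_sum]
  refine (Complex.abs_re_le_norm _).trans (hM.trans ?_)
  nlinarith [hθ.sum_symbol_mul_norm_sq_le ε F, mul_nonneg hP.nonneg hA]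

theorem exists_forall_abs_re_tsum_transportTerm_le (hs : 2 ≤ s) :
    ∃ C, 0 ≤ C ∧ ∀ ε, ε ≠ 0 → ε ^ 2 ≤ 1 → ∀ θ, memHs s θ → isReal θ →
      |(∑' q, transportTerm s ε θ q).re| ≤ C * gradNorm θ * hsNorm s θ ^ 2 := by
  obtain ⟨P, hP, C, hC⟩ := exists_isSchurMultiplier_trilinear hs
  have hC0 : 0 ≤ C := (hC 0 (by norm_num)).nonneg
  refine ⟨∑' k, wt (-1) k + 2 * C,
    add_nonneg (tsum_nonneg fun k => (wt_pos _ k).le) (by positivity), fun ε hε0 hε θ hθ hr => ?_⟩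
  rw [hθ.tsum_transportTerm_re hs hε0 hε hr hP, add_mul, add_mul]
  refine (abs_add_le _ _).trans (add_le_add ?_ ?_)
  · rw [abs_neg]
    exact abs_tsum_mean_transportTerm_le hs hθ hr
  · rw [abs_mul, abs_two, mul_assoc, mul_assoc, ← mul_assoc C]
    gcongr
    exact hθ.abs_tsum_symmTransportTerm_le hs hε0 hε (hC ε hε)

end FC

end TransportBound

section CommutatorSymbol

open Metric Set

/-- The fraction `l x² / (1 + l x²)`, in terms of which the logarithmic derivative
`x ↦ x (symbol²)' / symbol²` and its own logarithmic derivative are polynomial. -/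
def saturation (l x : ℝ) : ℝ := l * x ^ 2 / (1 + l * x ^ 2)

/-- The local degree `x (symbol²)' / symbol²` of homogeneity of the square of the symbol. -/
def symbolDegree (s ε x : ℝ) : ℝ := 2 * s * saturation 1 x - 4 * saturation (ε ^ 2) x

/-- The symbol of the second-order operator left over when the two halves of the stochastic
correction are symmetrized: `j` is the input frequency, `p` and `q` are those of the two noise
factors. -/
def commutatorSymbol (s ε j p q : ℝ) : ℝ :=
  (j + p) * ((j + p + q) * symbol s ε (j + p + q) ^ 2 + j * symbol s ε j ^ 2
      - 2 * ((j + p) * symbol s ε (j + p) ^ 2))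
    + (j + q) * ((j + p + q) * symbol s ε (j + p + q) ^ 2 + j * symbol s ε j ^ 2
      - 2 * ((j + q) * symbol s ε (j + q) ^ 2))

variable {s ε l : ℝ}

theorem saturation_mem_Icc (hl : 0 ≤ l) (x : ℝ) : saturation l x ∈ Icc 0 1 := by
  unfold saturation
  exact ⟨by positivity, div_le_one_of_le₀ (by linarith) (by positivity)⟩

theorem hasDerivAt_saturation (hl : 0 ≤ l) (x : ℝ) :
    HasDerivAt (saturation l) (2 * l * x / (1 + l * x ^ 2) ^ 2) x := by
  have hsq : HasDerivAt (fun x => l * x ^ 2) (2 * l * x) x :=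
    (((hasDerivAt_id x).pow 2).const_mul l).congr_deriv (by simp; ring)
  exact (hsq.div (hsq.const_add 1) (by positivity)).congr_deriv (by ring)

theorem mul_deriv_saturation (hl : 0 ≤ l) (x : ℝ) :
    x * (2 * l * x / (1 + l * x ^ 2) ^ 2) = 2 * saturation l x * (1 - saturation l x) := by
  have : 0 < 1 + l * x ^ 2 := by positivity
  unfold saturation
  field_simp
  ring

theorem abs_symbolDegree_le (hs : 0 ≤ s) (ε x : ℝ) : |symbolDegree s ε x| ≤ 2 * s + 4 := by
  obtain ⟨h0, h1⟩ := saturation_mem_Icc zero_le_one x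
  obtain ⟨e0, e1⟩ := saturation_mem_Icc (sq_nonneg ε) x
  rw [symbolDegree, abs_le]
  constructor <;> nlinarith

theorem exists_hasDerivAt_symbolDegree (hs : 0 ≤ s) (ε x : ℝ) :
    ∃ d, HasDerivAt (symbolDegree s ε) d x ∧ |x * d| ≤ 2 * s + 4 := by
  refine ⟨_, ((hasDerivAt_saturation zero_le_one x).const_mul (2 * s)).sub
    ((hasDerivAt_saturation (sq_nonneg ε) x).const_mul 4), ?_⟩
  have hprod {l : ℝ} (hl : 0 ≤ l) : 0 ≤ 2 * saturation l x * (1 - saturation l x) ∧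
      2 * saturation l x * (1 - saturation l x) ≤ 1 := by
    obtain ⟨h0, h1⟩ := saturation_mem_Icc hl x
    constructor <;> nlinarith [sq_nonneg (2 * saturation l x - 1)]
  obtain ⟨h0, h1⟩ := hprod zero_le_one
  obtain ⟨e0, e1⟩ := hprod (sq_nonneg ε)
  rw [mul_sub, mul_left_comm, mul_left_comm x 4, mul_deriv_saturation zero_le_one,
    mul_deriv_saturation (sq_nonneg ε), abs_le]
  constructor <;> nlinarith

theorem hasDerivAt_symbol (s ε x : ℝ) : HasDerivAt (symbol s ε)
    (symbol s ε x * (s * x / (1 + x ^ 2) - 2 * ε ^ 2 * x / (1 + ε ^ 2 * x ^ 2))) x := by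
  have hquad (l : ℝ) : HasDerivAt (fun x => 1 + l * x ^ 2) (2 * l * x) x :=
    ((((hasDerivAt_id x).pow 2).const_mul l).const_add 1).congr_deriv (by simp; ring)
  have hpow : HasDerivAt (fun x : ℝ => (1 + x ^ 2) ^ (s / 2))
      ((1 + x ^ 2) ^ (s / 2) * (s * x / (1 + x ^ 2))) x := by
    have h1 : HasDerivAt (fun x : ℝ => 1 + x ^ 2) (2 * x) x := by simpa using hquad 1
    refine (h1.rpow_const (.inl (by positivity))).congr_deriv ?_
    rw [Real.rpow_sub_one (by positivity)]
    ring
  refine (hpow.mul ((hquad (ε ^ 2)).fun_inv (by positivity))).congr_deriv ?_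
  unfold symbol
  field_simp
  ring

theorem hasDerivAt_mul_symbol_sq (s ε x : ℝ) : HasDerivAt (fun x => x * symbol s ε x ^ 2)
    (symbol s ε x ^ 2 * (1 + symbolDegree s ε x)) x := by
  refine ((hasDerivAt_id x).mul ((hasDerivAt_symbol s ε x).pow 2)).congr_deriv ?_
  simp only [symbolDegree, saturation, id, Pi.pow_apply]
  ring

theorem hasDerivAt_sq_mul_symbol_sq (s ε x : ℝ) : HasDerivAt (fun x => x ^ 2 * symbol s ε x ^ 2)
    (x * symbol s ε x ^ 2 * (2 + symbolDegree s ε x)) x := by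
  have h := ((hasDerivAt_id x).mul (hasDerivAt_mul_symbol_sq s ε x)).congr_deriv
    (g' := x * symbol s ε x ^ 2 * (2 + symbolDegree s ε x)) (by simp only [id]; ring)
  exact h.congr_of_eventuallyEq (.of_forall fun x => by simp only [id, Pi.mul_apply]; ring)

theorem abs_deriv_mul_symbol_sq_le (hs : 0 ≤ s) (ε x : ℝ) :
    |symbol s ε x ^ 2 * (1 + symbolDegree s ε x)| ≤ 4 * (s + 3) ^ 2 * symbol s ε x ^ 2 := by
  rw [abs_mul, abs_of_nonneg (sq_nonneg _), mul_comm]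
  gcongr
  have := abs_le.1 (abs_symbolDegree_le hs ε x)
  rw [abs_le]
  constructor <;> nlinarith

theorem exists_hasDerivAt_deriv_sq_mul_symbol_sq (hs : 0 ≤ s) (ε x : ℝ) :
    ∃ d, HasDerivAt (fun x => x * symbol s ε x ^ 2 * (2 + symbolDegree s ε x)) d x ∧
      |d| ≤ 4 * (s + 3) ^ 2 * symbol s ε x ^ 2 := by
  obtain ⟨d, hd, hxd⟩ := exists_hasDerivAt_symbolDegree hs ε x
  set A := symbolDegree s ε x
  have hA : |A| ≤ 2 * s + 4 := abs_symbolDegree_le hs ε x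
  refine ⟨symbol s ε x ^ 2 * ((1 + A) * (2 + A) + x * d),
    ((hasDerivAt_mul_symbol_sq s ε x).mul (hd.const_add 2)).congr_deriv (by ring), ?_⟩
  rw [abs_mul, abs_of_nonneg (sq_nonneg _), mul_comm]
  gcongr
  have h1 : |1 + A| ≤ 2 * s + 5 := (abs_add_le _ _).trans (by rw [abs_one]; linarith)
  have h2 : |2 + A| ≤ 2 * s + 6 := (abs_add_le _ _).trans (by rw [abs_two]; linarith)
  calc |(1 + A) * (2 + A) + x * d| ≤ |1 + A| * |2 + A| + |x * d| := by
        rw [← abs_mul]; exact abs_add_le _ _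
    _ ≤ (2 * s + 5) * (2 * s + 6) + (2 * s + 4) := by gcongr
    _ ≤ 4 * (s + 3) ^ 2 := by nlinarith

theorem symbol_le_rpow_mul_symbol (hs : 0 ≤ s) (hε : ε ^ 2 ≤ 1) (x y : ℝ) :
    symbol s ε y ≤ (2 * (1 + (y - x) ^ 2)) ^ (s / 2 + 1) * symbol s ε x := by
  set W := 2 * (1 + (y - x) ^ 2)
  have hnum : 1 + y ^ 2 ≤ W * (1 + x ^ 2) := by
    nlinarith [sq_nonneg (y - 2 * x), sq_nonneg ((y - x) * x)]
  have hden : 1 + ε ^ 2 * x ^ 2 ≤ W * (1 + ε ^ 2 * y ^ 2) := by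
    have hx : ε ^ 2 * x ^ 2 ≤ ε ^ 2 * (2 * y ^ 2 + 2 * (y - x) ^ 2) := by
      gcongr
      nlinarith [sq_nonneg (2 * y - x)]
    nlinarith [mul_le_mul_of_nonneg_right hε (sq_nonneg (y - x)),
      mul_nonneg (sq_nonneg (y - x)) (mul_nonneg (sq_nonneg ε) (sq_nonneg y)),
      mul_nonneg (sq_nonneg ε) (sq_nonneg y)]
  have hpow : (1 + y ^ 2) ^ (s / 2) ≤ W ^ (s / 2) * (1 + x ^ 2) ^ (s / 2) := by
    rw [← Real.mul_rpow (by positivity) (by positivity)]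
    gcongr
  have hinv : (1 + ε ^ 2 * y ^ 2)⁻¹ ≤ W * (1 + ε ^ 2 * x ^ 2)⁻¹ := by
    rwa [← div_eq_mul_inv, inv_le_iff_one_le_mul₀ (by positivity), div_mul_eq_mul_div,
      one_le_div (by positivity)]
  calc symbol s ε y ≤ W ^ (s / 2) * (1 + x ^ 2) ^ (s / 2) * (W * (1 + ε ^ 2 * x ^ 2)⁻¹) := by
        unfold symbol; gcongr
    _ = W ^ (s / 2 + 1) * symbol s ε x := by
        rw [Real.rpow_add_one (by positivity), symbol]; ring

theorem abs_second_difference_le {f f' f'' : ℝ → ℝ} {D : Set ℝ} {K x h k : ℝ} (hD : Convex ℝ D)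
    (hf : ∀ z, HasDerivAt f (f' z) z) (hf' : ∀ z, HasDerivAt f' (f'' z) z)
    (hK : ∀ z ∈ D, |f'' z| ≤ K) (hx : x ∈ D) (hxh : x + h ∈ D) (hxk : x + k ∈ D)
    (hxhk : x + h + k ∈ D) :
    |f (x + h + k) - f (x + h) - (f (x + k) - f x)| ≤ K * |k| * |h| := by
  have hshift : Convex ℝ ((· + k) ⁻¹' D) := hD.translate_preimage_left k
  have hderiv (z : ℝ) : HasDerivAt (fun z => f (z + k) - f z) (f' (z + k) - f' z) z :=
    ((hf _).comp_add_const z k).sub (hf z)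
  have hbound (z : ℝ) (hz : z ∈ D ∩ (· + k) ⁻¹' D) : ‖f' (z + k) - f' z‖ ≤ K * |k| := by
    simpa using hD.norm_image_sub_le_of_norm_hasDerivWithin_le
      (fun w _ => (hf' w).hasDerivWithinAt) hK hz.1 hz.2
  simpa using (hD.inter hshift).norm_image_sub_le_of_norm_hasDerivWithin_le
    (fun z _ => (hderiv z).hasDerivWithinAt) hbound ⟨hx, hxk⟩ ⟨hxh, hxhk⟩

/- The commutator symbol is twice a second difference of `x ↦ x² symbol(x)²` minus a first
difference of `x ↦ x symbol(x)²`, which is what makes it of order zero in `j`. -/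
theorem abs_commutatorSymbol_le {K j p q : ℝ} {D : Set ℝ} (hs : 0 ≤ s) (hD : Convex ℝ D)
    (hK : ∀ z ∈ D, symbol s ε z ^ 2 ≤ K) (hj : j ∈ D) (hp : j + p ∈ D) (hq : j + q ∈ D)
    (hpq : j + p + q ∈ D) :
    |commutatorSymbol s ε j p q| ≤ 4 * (s + 3) ^ 2 * K * (2 * |p| * |q| + (p + q) ^ 2) := by
  have hK' {z : ℝ} (hz : z ∈ D) : 4 * (s + 3) ^ 2 * symbol s ε z ^ 2 ≤ 4 * (s + 3) ^ 2 * K := by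
    have := hK z hz
    gcongr
  choose F'' hF'' hF''le using exists_hasDerivAt_deriv_sq_mul_symbol_sq hs ε
  have hsecond := abs_second_difference_le hD (hasDerivAt_sq_mul_symbol_sq s ε) hF''
    (fun z hz => (hF''le z).trans (hK' hz)) hj hp hq hpq
  have hfirst := hD.norm_image_sub_le_of_norm_hasDerivWithin_le
    (fun z _ => (hasDerivAt_mul_symbol_sq s ε z).hasDerivWithinAt)
    (fun z hz => (abs_deriv_mul_symbol_sq_le hs ε z).trans (hK' hz)) hj hpq
  rw [Real.norm_eq_abs, Real.norm_eq_abs, add_assoc, add_sub_cancel_left] at hfirst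
  set S := ((j + p + q) ^ 2 * symbol s ε (j + p + q) ^ 2 - (j + p) ^ 2 * symbol s ε (j + p) ^ 2
    - ((j + q) ^ 2 * symbol s ε (j + q) ^ 2 - j ^ 2 * symbol s ε j ^ 2))
  set N := (j + (p + q)) * symbol s ε (j + (p + q)) ^ 2 - j * symbol s ε j ^ 2 with hN
  have hdecomp : commutatorSymbol s ε j p q = 2 * S - (p + q) * N := by
    rw [hN, ← add_assoc]
    unfold commutatorSymbol S
    ring
  calc |commutatorSymbol s ε j p q| ≤ 2 * |S| + |p + q| * |N| := by
        rw [hdecomp, ← abs_two, ← abs_mul, ← abs_mul, abs_two]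
        exact abs_sub _ _
    _ ≤ 2 * (4 * (s + 3) ^ 2 * K * |q| * |p|) + |p + q| * (4 * (s + 3) ^ 2 * K * |p + q|) := by
        gcongr
    _ = 4 * (s + 3) ^ 2 * K * (2 * |p| * |q| + (p + q) ^ 2) := by rw [← sq_abs (p + q)]; ring

theorem symbol_sq_le_of_mem_closedBall {j k z p q : ℝ} (hs : 0 ≤ s) (hε : ε ^ 2 ≤ 1)
    (hz : z ∈ closedBall j (|p| + |q|) ∩ closedBall k (|p| + |q|)) :
    symbol s ε z ^ 2
      ≤ (4 * ((1 + p ^ 2) * (1 + q ^ 2))) ^ (s + 2) * (symbol s ε j * symbol s ε k) := by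
  set W := 4 * ((1 + p ^ 2) * (1 + q ^ 2))
  have hpeetre {x : ℝ} (hx : z ∈ closedBall x (|p| + |q|)) :
      symbol s ε z ≤ W ^ (s / 2 + 1) * symbol s ε x := by
    have hsq : (z - x) ^ 2 ≤ (|p| + |q|) ^ 2 := sq_le_sq.2 (hx.trans (le_abs_self _))
    have hR : (|p| + |q|) ^ 2 ≤ 2 * (p ^ 2 + q ^ 2) := by
      simpa only [sq_abs] using add_sq_le (a := |p|) (b := |q|)
    have hle : 2 * (1 + (z - x) ^ 2) ≤ W := by
      nlinarith [mul_nonneg (sq_nonneg p) (sq_nonneg q)]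
    refine (symbol_le_rpow_mul_symbol hs hε x z).trans ?_
    have := (symbol_pos s ε x).le
    gcongr
  calc symbol s ε z ^ 2 = symbol s ε z * symbol s ε z := sq _
    _ ≤ W ^ (s / 2 + 1) * symbol s ε j * (W ^ (s / 2 + 1) * symbol s ε k) :=
      mul_le_mul (hpeetre hz.1) (hpeetre hz.2) (symbol_pos s ε z).le
        (mul_nonneg (by positivity) (symbol_pos s ε j).le)
    _ = W ^ (s + 2) * (symbol s ε j * symbol s ε k) := by
      rw [show s + 2 = s / 2 + 1 + (s / 2 + 1) by ring, Real.rpow_add (y := s / 2 + 1)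
        (by positivity)]
      ring

/-- The constant in `abs_commutatorSymbol_le_rpow`, which depends only on `s`. -/
def commutatorConst (s : ℝ) : ℝ := 12 * (s + 3) ^ 2 * 4 ^ (s + 2)

theorem commutatorConst_nonneg (s : ℝ) : 0 ≤ commutatorConst s := by
  unfold commutatorConst
  positivity

theorem abs_commutatorSymbol_le_rpow (hs : 0 ≤ s) (hε : ε ^ 2 ≤ 1) (j p q : ℝ) :
    |commutatorSymbol s ε j p q| ≤ commutatorConst s * ((1 + p ^ 2) * (1 + q ^ 2)) ^ (s + 3)
      * (symbol s ε j * symbol s ε (j + p + q)) := by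
  set R := |p| + |q|
  have hpR : |p| ≤ R := le_add_of_nonneg_right (abs_nonneg _)
  have hqR : |q| ≤ R := le_add_of_nonneg_left (abs_nonneg _)
  have hpqR : |p + q| ≤ R := abs_add_le _ _
  have hR : 0 ≤ R := (abs_nonneg p).trans hpR
  have hmem {z : ℝ} (h₁ : |z - j| ≤ R) (h₂ : |z - (j + p + q)| ≤ R) :
      z ∈ closedBall j R ∩ closedBall (j + p + q) R := ⟨h₁, h₂⟩
  have hbound := abs_commutatorSymbol_le hs
    ((convex_closedBall j R).inter (convex_closedBall (j + p + q) R))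
    (fun z hz => symbol_sq_le_of_mem_closedBall hs hε hz)
    (hmem (z := j) (by simpa) (by rw [abs_sub_comm]; convert hpqR using 2; ring))
    (hmem (z := j + p) (by simpa) (by simpa))
    (hmem (z := j + q) (by simpa) (by rw [abs_sub_comm]; convert hpR using 2; ring))
    (hmem (z := j + p + q) (by convert hpqR using 2; ring) (by simpa))
  set P := (1 + p ^ 2) * (1 + q ^ 2)
  have hP : 0 < P := by positivity
  have hpq : 2 * |p| * |q| + (p + q) ^ 2 ≤ 3 * P := by
    have h₁ := two_mul_le_add_sq |p| |q|
    have h₂ := add_sq_le (a := p) (b := q)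
    rw [sq_abs, sq_abs] at h₁
    nlinarith [mul_nonneg (sq_nonneg p) (sq_nonneg q)]
  have hjpos := symbol_pos s ε j
  have hkpos := symbol_pos s ε (j + p + q)
  calc |commutatorSymbol s ε j p q|
      ≤ 4 * (s + 3) ^ 2 * ((4 * P) ^ (s + 2) * (symbol s ε j * symbol s ε (j + p + q)))
          * (3 * P) := hbound.trans (by gcongr)
    _ = commutatorConst s * P ^ (s + 3) * (symbol s ε j * symbol s ε (j + p + q)) := by
      rw [show s + 3 = s + 2 + 1 by ring, Real.rpow_add_one hP.ne',
        Real.mul_rpow zero_le_four hP.le, commutatorConst]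
      ring

theorem abs_commutatorSymbol_le_wt (hs : 0 ≤ s) (hε : ε ^ 2 ≤ 1) (j p q : ℤ) :
    |commutatorSymbol s ε j p q| ≤ commutatorConst s * (FC.wt (s + 3) p * FC.wt (s + 3) q)
      * (FC.wt (s / 2) j * FC.wt (s / 2) (j + (p + q))) := by
  have hwt : ((1 + (p : ℝ) ^ 2) * (1 + (q : ℝ) ^ 2)) ^ (s + 3)
      = FC.wt (s + 3) p * FC.wt (s + 3) q := Real.mul_rpow (by positivity) (by positivity)
  have hk : symbol s ε (j + p + q) ≤ FC.wt (s / 2) (j + (p + q)) := by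
    simpa [add_assoc] using symbol_le_wt s ε (j + (p + q))
  have hprod : symbol s ε j * symbol s ε (j + p + q)
      ≤ FC.wt (s / 2) j * FC.wt (s / 2) (j + (p + q)) :=
    mul_le_mul (symbol_le_wt s ε j) hk (symbol_pos s ε _).le (FC.wt_pos _ j).le
  refine (abs_commutatorSymbol_le_rpow hs hε j p q).trans ?_
  rw [hwt]
  exact mul_le_mul_of_nonneg_left hprod (mul_nonneg (commutatorConst_nonneg s)
    (mul_nonneg (FC.wt_pos _ p).le (FC.wt_pos _ q).le))

end CommutatorSymbol

section LieDerivative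

namespace FC

variable {s t K : ℝ} {ξ c : FC}

theorem summable_wt_mul_norm_of_le (hst : s ≤ t) (hξ : Summable fun p => wt t p * ‖ξ p‖) :
    Summable fun p => wt s p * ‖ξ p‖ :=
  hξ.of_nonneg_of_le (fun p => mul_nonneg (wt_pos s p).le (norm_nonneg _)) fun p =>
    mul_le_mul_of_nonneg_right (wt_le_wt hst p) (norm_nonneg _)

theorem summable_norm_convolution (ht : 0 ≤ t) (hξ : Summable fun p => wt t p * ‖ξ p‖)
    (hc : ∀ k, ‖c k‖ ≤ K * wt t k) (k : ℤ) : Summable fun p => ‖ξ p * c (k - p)‖ := by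
  have hK : 0 ≤ K := by simpa [wt_zero_right] using (norm_nonneg _).trans (hc 0)
  refine (hξ.mul_left (K * (2 ^ t * wt t k))).of_nonneg_of_le (fun p => norm_nonneg _) fun p => ?_
  have hwt : wt t (k - p) ≤ 2 ^ t * wt t k * wt t p := by
    simpa only [sub_eq_add_neg, wt_neg] using wt_add_right_le ht k (-p)
  calc ‖ξ p * c (k - p)‖ ≤ ‖ξ p‖ * (K * (2 ^ t * wt t k * wt t p)) := by
        rw [norm_mul]
        gcongr
        exact (hc _).trans (by gcongr)
    _ = K * (2 ^ t * wt t k) * (wt t p * ‖ξ p‖) := by ring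

theorem norm_mul_apply_le (hξ : Summable fun p => ‖ξ p‖) (hc : ∀ k, ‖c k‖ ≤ K) (k : ℤ) :
    ‖mul ξ c k‖ ≤ (∑' p, ‖ξ p‖) * K := by
  rw [← tsum_mul_right]
  refine tsum_of_norm_bounded (hξ.mul_right K).hasSum fun p => ?_
  rw [norm_mul]
  gcongr
  exact hc _

theorem lie_eq_D1_mul (hξ : Summable fun p => wt 1 p * ‖ξ p‖)
    (hc : ∀ k, ‖c k‖ ≤ K * wt (1 / 2) k) : lie ξ c = D1 (mul ξ c) := by
  have hone (k : ℤ) : wt 1 k = wt (1 / 2) k * wt (1 / 2) k := by rw [← wt_add, add_halves]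
  have hD1c (k : ℤ) : ‖D1 c k‖ ≤ K * wt 1 k := by
    refine (norm_D1_le_wt_half_mul c k).trans ?_
    rw [hone, mul_left_comm]
    exact mul_le_mul_of_nonneg_left (hc k) (wt_pos _ k).le
  have hD1ξ : Summable fun p => wt (1 / 2) p * ‖D1 ξ p‖ := by
    refine hξ.of_nonneg_of_le (fun p => mul_nonneg (wt_pos _ p).le (norm_nonneg _)) fun p => ?_
    rw [hone, mul_assoc]
    exact mul_le_mul_of_nonneg_left (norm_D1_le_wt_half_mul ξ p) (wt_pos _ p).le
  funext k
  have hleft := (summable_norm_convolution zero_le_one hξ hD1c k).of_norm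
  have hright := (summable_norm_convolution (by norm_num) hD1ξ hc k).of_norm
  simp only [lie, Pi.add_apply, mul]
  rw [← hleft.tsum_add hright, D1, mul, ← tsum_mul_left]
  refine tsum_congr fun p => ?_
  simp only [D1]
  push_cast
  ring

theorem lie_eq_D1_mul_of_bounded (hξ : Summable fun p => wt 1 p * ‖ξ p‖)
    (hc : ∀ k, ‖c k‖ ≤ K) : lie ξ c = D1 (mul ξ c) :=
  lie_eq_D1_mul (K := K) hξ fun k => (hc k).trans
    (le_mul_of_one_le_right ((norm_nonneg _).trans (hc 0)) (one_le_wt (by norm_num) k))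

theorem lie2_eq_D1_mul_D1_mul (hξ : Summable fun p => wt 1 p * ‖ξ p‖) (hc : ∀ k, ‖c k‖ ≤ K) :
    lie2 ξ c = D1 (mul ξ (D1 (mul ξ c))) := by
  have hξ₀ : Summable fun p => ‖ξ p‖ := by
    simpa only [wt_zero_left, one_mul] using summable_wt_mul_norm_of_le zero_le_one hξ
  rw [lie2, lie_eq_D1_mul_of_bounded hξ hc]
  refine lie_eq_D1_mul (K := (∑' p, ‖ξ p‖) * K) hξ fun k => ?_
  rw [mul_comm]
  exact (norm_D1_le_wt_half_mul _ k).trans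
    (mul_le_mul_of_nonneg_left (norm_mul_apply_le hξ₀ hc k) (wt_pos _ k).le)

theorem memHs.norm_le (hs : 0 ≤ s) (hc : memHs s c) (k : ℤ) : ‖c k‖ ≤ hsNorm s c :=
  (le_mul_of_one_le_left (norm_nonneg _) (one_le_wt (by positivity) k)).trans (hc.hsCoeff_le k)

theorem hsNorm_T_sq (s ε : ℝ) (c : FC) :
    hsNorm s (T ε c) ^ 2 = ∑' k : ℤ, symbol s ε k ^ 2 * ‖c k‖ ^ 2 := by
  rw [hsNorm_sq]
  refine tsum_congr fun k => ?_
  rw [T, mult, symbol_sq, norm_mul, Complex.norm_real, Real.norm_eq_abs, mul_pow, sq_abs]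
  ring

end FC

end LieDerivative

section Noise

open ComplexConjugate

namespace FC

variable {ι : Type*} {s ε K : ℝ} {ξ : ι → FC} {θ : FC} {m : ℝ → ℝ → ℝ → ℝ}

/-- The coefficient of the interaction of two modes `p`, `q` of `ξ i` with the mode `j` of `θ`,
encoded as `((i, p, q), j)`, in a quadratic form in `θ`. -/
def noiseProd (ξ : ι → FC) (θ : FC) (w : (ι × ℤ × ℤ) × ℤ) : ℂ :=
  ξ w.1.1 w.1.2.1 * ξ w.1.1 w.1.2.2 * θ w.2 * conj (θ (w.2 + (w.1.2.1 + w.1.2.2)))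

/-- The general term of the quadratic form in `θ` whose symbol, as a function of the modes
`j`, `p`, `q`, is `m`. -/
def noiseTerm (m : ℝ → ℝ → ℝ → ℝ) (ξ : ι → FC) (θ : FC) (w : (ι × ℤ × ℤ) × ℤ) : ℂ :=
  (m w.2 w.1.2.1 w.1.2.2 : ℂ) * noiseProd ξ θ w

/-- The weight carried by the pair of noise modes `(p, q)` of `ξ i`. -/
def noiseWeight (s : ℝ) (ξ : ι → FC) (a : ι × ℤ × ℤ) : ℝ :=
  wt (s + 3) a.2.1 * ‖ξ a.1 a.2.1‖ * (wt (s + 3) a.2.2 * ‖ξ a.1 a.2.2‖)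

/-- The symbol `m` loses at most `s` derivatives on `θ`, up to a fixed number of derivatives
on the noise. -/
def IsNoiseSymbol (s K : ℝ) (m : ℝ → ℝ → ℝ → ℝ) : Prop :=
  ∀ j p q : ℤ, |m j p q|
    ≤ K * (wt (s + 3) p * wt (s + 3) q) * (wt (s / 2) j * wt (s / 2) (j + (p + q)))

theorem noiseWeight_nonneg (s : ℝ) (ξ : ι → FC) : 0 ≤ noiseWeight s ξ := fun _ =>
  mul_nonneg (mul_nonneg (wt_pos _ _).le (norm_nonneg _))
    (mul_nonneg (wt_pos _ _).le (norm_nonneg _))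

theorem memHs.wt_mul_norm_le {c : FC} (hc : memHs (2 * s + 8) c) (k : ℤ) :
    wt (s + 3) k * ‖c k‖ ≤ hsNorm (2 * s + 8) c * wt (-1) k := by
  have hwt : wt (s + 3) k = wt (-1) k * wt ((2 * s + 8) / 2) k := by
    rw [← wt_add]
    ring_nf
  rw [hwt, mul_assoc, mul_comm]
  exact mul_le_mul_of_nonneg_right (hc.hsCoeff_le k) (wt_pos _ k).le

theorem summable_noiseWeight (hξ : ∀ i, memHs (2 * s + 8) (ξ i))
    (hsum : Summable fun i => hsNorm (2 * s + 8) (ξ i) ^ 2) : Summable (noiseWeight s ξ) := by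
  have hnonneg : 0 ≤ wt (-1) := fun k => (wt_pos _ k).le
  have hmodes : Summable fun a : ℤ × ℤ => wt (-1) a.1 * wt (-1) a.2 :=
    summable_wt_neg_one.mul_of_nonneg summable_wt_neg_one hnonneg hnonneg
  refine (hsum.mul_of_nonneg hmodes (fun i => sq_nonneg _) fun _ =>
    mul_nonneg (hnonneg _) (hnonneg _)).of_nonneg_of_le (noiseWeight_nonneg s ξ) fun a => ?_
  calc noiseWeight s ξ a
      ≤ hsNorm (2 * s + 8) (ξ a.1) * wt (-1) a.2.1 * (hsNorm (2 * s + 8) (ξ a.1) * wt (-1) a.2.2) :=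
        mul_le_mul ((hξ a.1).wt_mul_norm_le _) ((hξ a.1).wt_mul_norm_le _)
          (mul_nonneg (wt_pos _ _).le (norm_nonneg _))
          (mul_nonneg (hsNorm_nonneg _ _) (wt_pos _ _).le)
    _ = _ := by ring

theorem IsNoiseSymbol.norm_noiseTerm_le (hm : IsNoiseSymbol s K m) (ξ : ι → FC) (θ : FC)
    (w : (ι × ℤ × ℤ) × ℤ) : ‖noiseTerm m ξ θ w‖ ≤ K * (noiseWeight s ξ w.1
      * (hsCoeff s θ w.2 * hsCoeff s θ (w.2 + (w.1.2.1 + w.1.2.2)))) := by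
  rw [noiseTerm, norm_mul, Complex.norm_real, Real.norm_eq_abs]
  refine (mul_le_mul_of_nonneg_right (hm _ _ _) (norm_nonneg _)).trans_eq ?_
  rw [noiseProd, norm_mul, norm_mul, norm_mul, RCLike.norm_conj, noiseWeight, hsCoeff, hsCoeff]
  ring

theorem memHs.summable_and_tsum_noiseWeight_mul_le (hθ : memHs s θ)
    (hα : Summable (noiseWeight s ξ)) :
    Summable (fun w : (ι × ℤ × ℤ) × ℤ => noiseWeight s ξ w.1
      * (hsCoeff s θ w.2 * hsCoeff s θ (w.2 + (w.1.2.1 + w.1.2.2)))) ∧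
    ∑' w : (ι × ℤ × ℤ) × ℤ, noiseWeight s ξ w.1
      * (hsCoeff s θ w.2 * hsCoeff s θ (w.2 + (w.1.2.1 + w.1.2.2)))
        ≤ (∑' a, noiseWeight s ξ a) * hsNorm s θ ^ 2 := by
  have hbound := summable_and_tsum_mul_mul_shift_le hα (noiseWeight_nonneg s ξ)
    (fun a => a.2.1 + a.2.2) hθ.summable_hsCoeff_sq hθ.summable_hsCoeff_sq
    (hsCoeff_nonneg s θ) (hsCoeff_nonneg s θ)
  rwa [tsum_hsCoeff_sq, add_self_div_two] at hbound

theorem IsNoiseSymbol.summable_noiseTerm (hm : IsNoiseSymbol s K m)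
    (hα : Summable (noiseWeight s ξ)) (hθ : memHs s θ) : Summable (noiseTerm m ξ θ) :=
  .of_norm_bounded ((hθ.summable_and_tsum_noiseWeight_mul_le hα).1.mul_left K)
    (hm.norm_noiseTerm_le ξ θ)

theorem IsNoiseSymbol.norm_tsum_noiseTerm_le (hm : IsNoiseSymbol s K m) (hK : 0 ≤ K)
    (hα : Summable (noiseWeight s ξ)) (hθ : memHs s θ) :
    ‖∑' w, noiseTerm m ξ θ w‖ ≤ K * ((∑' a, noiseWeight s ξ a) * hsNorm s θ ^ 2) := by
  obtain ⟨hsum, hle⟩ := hθ.summable_and_tsum_noiseWeight_mul_le hα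
  refine (tsum_of_norm_bounded (hsum.mul_left K).hasSum (hm.norm_noiseTerm_le ξ θ)).trans ?_
  rw [tsum_mul_left]
  gcongr

section Symmetrization

/-- Exchange of the two noise modes. -/
def noiseSwap : (ι × ℤ × ℤ) × ℤ ≃ (ι × ℤ × ℤ) × ℤ where
  toFun w := ((w.1.1, w.1.2.2, w.1.2.1), w.2)
  invFun w := ((w.1.1, w.1.2.2, w.1.2.1), w.2)
  left_inv _ := rfl
  right_inv _ := rfl

/-- Exchange of the two modes `j` and `j + p + q` of `θ`, which conjugates `noiseProd` when the
noise is real. -/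
def noiseReversal : (ι × ℤ × ℤ) × ℤ ≃ (ι × ℤ × ℤ) × ℤ where
  toFun w := ((w.1.1, -w.1.2.2, -w.1.2.1), w.2 + (w.1.2.1 + w.1.2.2))
  invFun w := ((w.1.1, -w.1.2.2, -w.1.2.1), w.2 + (w.1.2.1 + w.1.2.2))
  left_inv w := by ext <;> simp [← neg_add_rev]
  right_inv w := by ext <;> simp [← neg_add_rev]

/-- The sum of the four symbols obtained from `m` by `noiseSwap` and `noiseReversal`. -/
def noiseSymmetrization (m : ℝ → ℝ → ℝ → ℝ) (j p q : ℝ) : ℝ :=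
  m j p q + m j q p + (m (j + (p + q)) (-q) (-p) + m (j + (p + q)) (-p) (-q))

theorem noiseProd_noiseSwap (ξ : ι → FC) (θ : FC) (w : (ι × ℤ × ℤ) × ℤ) :
    noiseProd ξ θ (noiseSwap w) = noiseProd ξ θ w := by
  simp only [noiseProd, noiseSwap, Equiv.coe_fn_mk]
  rw [add_comm w.1.2.2, mul_comm (ξ w.1.1 w.1.2.2)]

theorem noiseProd_noiseReversal_re (hr : ∀ i, isReal (ξ i)) (θ : FC) (w : (ι × ℤ × ℤ) × ℤ) :
    (noiseProd ξ θ (noiseReversal w)).re = (noiseProd ξ θ w).re := by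
  have hconj : noiseProd ξ θ (noiseReversal w) = conj (noiseProd ξ θ w) := by
    have hj : w.2 + (w.1.2.1 + w.1.2.2) + (-w.1.2.2 + -w.1.2.1) = w.2 := by ring
    simp only [noiseProd, noiseReversal, Equiv.coe_fn_mk, hj, hr _ _, map_mul, Complex.conj_conj]
    ring
  rw [hconj, Complex.conj_re]

theorem noiseTerm_noiseSymmetrization_re (hr : ∀ i, isReal (ξ i)) (m : ℝ → ℝ → ℝ → ℝ) (θ : FC)
    (w : (ι × ℤ × ℤ) × ℤ) :
    (noiseTerm (noiseSymmetrization m) ξ θ w).re =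
      (noiseTerm m ξ θ w).re + (noiseTerm m ξ θ (noiseSwap w)).re
        + ((noiseTerm m ξ θ (noiseReversal w)).re
          + (noiseTerm m ξ θ (noiseSwap (noiseReversal w))).re) := by
  simp only [noiseTerm, Complex.re_ofReal_mul, noiseProd_noiseSwap, noiseProd_noiseReversal_re hr]
  simp only [noiseSymmetrization, noiseSwap, noiseReversal, Equiv.coe_fn_mk]
  push_cast
  ring

theorem tsum_noiseTerm_noiseSymmetrization_re (hr : ∀ i, isReal (ξ i))
    (hm : Summable (noiseTerm m ξ θ)) :
    ∑' w, (noiseTerm (noiseSymmetrization m) ξ θ w).re = 4 * (∑' w, noiseTerm m ξ θ w).re := by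
  have hre := Complex.hasSum_re hm.hasSum
  have hswap := hre.add ((noiseSwap.hasSum_iff).2 hre)
  refine ((hswap.add ((noiseReversal.hasSum_iff).2 hswap)).congr_fun
    (noiseTerm_noiseSymmetrization_re hr m θ)).tsum_eq.trans ?_
  ring

theorem IsNoiseSymbol.abs_re_tsum_noiseTerm_le_of_symmetrization (hr : ∀ i, isReal (ξ i))
    (hK : 0 ≤ K) (hα : Summable (noiseWeight s ξ)) (hθ : memHs s θ)
    (hsum : Summable (noiseTerm m ξ θ)) (hm : IsNoiseSymbol s K (noiseSymmetrization m)) :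
    |(∑' w, noiseTerm m ξ θ w).re|
      ≤ K / 4 * (∑' a, noiseWeight s ξ a) * hsNorm s θ ^ 2 := by
  have hle := (Complex.abs_re_le_norm _).trans (hm.norm_tsum_noiseTerm_le hK hα hθ)
  rw [Complex.re_tsum (hm.summable_noiseTerm hα hθ), tsum_noiseTerm_noiseSymmetrization_re hr hsum,
    abs_mul, abs_of_pos four_pos] at hle
  linarith

end Symmetrization

end FC

end Noise

section NoiseIdentities

open ComplexConjugate

namespace FC

/-- The symbol of the quadratic form `(T̃_ε 𝓛²_ξ θ, T̃_ε θ)_{H^s}`. -/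
def correctionSymbol (s ε j p q : ℝ) : ℝ :=
  -((j + (p + q)) * (j + q) * symbol s ε (j + (p + q)) ^ 2)

/-- The symbol of the quadratic form `‖T̃_ε 𝓛_ξ θ‖²_{H^s}`. -/
def variationSymbol (s ε j _p q : ℝ) : ℝ := (j + q) ^ 2 * symbol s ε (j + q) ^ 2

theorem noiseSymmetrization_correctionSymbol_add_variationSymbol (s ε j p q : ℝ) :
    noiseSymmetrization (fun j p q => correctionSymbol s ε j p q + variationSymbol s ε j p q) j p q
      = -commutatorSymbol s ε j p q := by
  have hp : j + (p + q) + -q = j + p := by ring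
  have hq : j + (p + q) + -p = j + q := by ring
  have hj : j + (p + q) + (-q + -p) = j := by ring
  have hj' : j + (p + q) + (-p + -q) = j := by ring
  simp only [noiseSymmetrization, correctionSymbol, variationSymbol, commutatorSymbol, hp, hq, hj,
    hj', add_comm q p, add_assoc j p q]
  ring

variable {s ε : ℝ}

theorem isNoiseSymbol_noiseSymmetrization (hs : 0 ≤ s) (hε : ε ^ 2 ≤ 1) :
    IsNoiseSymbol s (commutatorConst s) (noiseSymmetrization fun j p q =>
      correctionSymbol s ε j p q + variationSymbol s ε j p q) := fun j p q => by
  rw [noiseSymmetrization_correctionSymbol_add_variationSymbol, abs_neg]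
  exact abs_commutatorSymbol_le_wt hs hε j p q

theorem abs_mul_symbol_le (hε0 : ε ≠ 0) (hε : ε ^ 2 ≤ 1) (k : ℤ) :
    |(k : ℝ)| * symbol s ε k ≤ (ε ^ 2)⁻¹ * wt ((s - 1) / 2) k := by
  calc |(k : ℝ)| * symbol s ε k ≤ wt (1 / 2) k * ((ε ^ 2)⁻¹ * wt (s / 2 - 1) k) :=
        mul_le_mul (abs_le_wt_half k) (symbol_le_inv_sq_mul_wt hε0 hε k) (symbol_pos ..).le
          (wt_pos _ k).le
    _ = (ε ^ 2)⁻¹ * wt ((s - 1) / 2) k := by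
      rw [mul_left_comm, ← wt_add]
      ring_nf

theorem wt_add_right_le_of_le {r t : ℝ} (ht : 0 ≤ t) (htr : t ≤ r) (j k : ℤ) :
    wt t (j + k) ≤ 2 ^ t * wt t j * wt r k := by
  have := wt_pos t j
  exact (wt_add_right_le ht j k).trans (by gcongr; exact wt_le_wt htr k)

theorem isNoiseSymbol_correctionSymbol (hs : 1 ≤ s) (hε0 : ε ≠ 0) (hε : ε ^ 2 ≤ 1) :
    IsNoiseSymbol s ((ε ^ 2)⁻¹ * 2 ^ (s - 1 / 2)) (correctionSymbol s ε) := fun j p q => by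
  set k := j + (p + q) with hk
  set l := j + q with hl
  have hkR : (j : ℝ) + (p + q) = k := by rw [hk]; push_cast; rfl
  have hlR : (j : ℝ) + q = l := by rw [hl]; push_cast; rfl
  have := wt_pos (s / 2) k
  have := wt_pos (s + 3) p
  have := symbol_pos s ε k
  have := wt_pos (1 / 2) l
  have := wt_pos ((s - 1) / 2) l
  have hkl : wt ((s - 1) / 2) k ≤ 2 ^ ((s - 1) / 2) * wt ((s - 1) / 2) l * wt (s + 3) p :=
    (by grind : k = l + p) ▸ wt_add_right_le_of_le (by linarith) (by linarith) l p
  have hlj : wt (s / 2) l ≤ 2 ^ (s / 2) * wt (s / 2) j * wt (s + 3) q :=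
    wt_add_right_le_of_le (by linarith) (by linarith) j q
  have hsymbol : |(k : ℝ)| * symbol s ε k
      ≤ (ε ^ 2)⁻¹ * (2 ^ ((s - 1) / 2) * wt ((s - 1) / 2) l * wt (s + 3) p) :=
    (abs_mul_symbol_le hε0 hε k).trans (by gcongr)
  have hhalf : wt (s / 2) l = wt (1 / 2) l * wt ((s - 1) / 2) l := by
    rw [← wt_add]
    ring_nf
  have htwo : (2 : ℝ) ^ (s - 1 / 2) = 2 ^ ((s - 1) / 2) * 2 ^ (s / 2) := by
    rw [← Real.rpow_add two_pos]
    ring_nf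
  rw [correctionSymbol, hkR, hlR, abs_neg, abs_mul, abs_mul, abs_sq, htwo]
  calc |(k : ℝ)| * |(l : ℝ)| * symbol s ε k ^ 2
      = |(k : ℝ)| * symbol s ε k * |(l : ℝ)| * symbol s ε k := by ring
    _ ≤ (ε ^ 2)⁻¹ * (2 ^ ((s - 1) / 2) * wt ((s - 1) / 2) l * wt (s + 3) p) * wt (1 / 2) l
        * wt (s / 2) k := by
        gcongr
        exacts [abs_le_wt_half l, symbol_le_wt s ε k]
    _ = (ε ^ 2)⁻¹ * 2 ^ ((s - 1) / 2) * wt (s / 2) l * wt (s + 3) p * wt (s / 2) k := by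
        rw [hhalf]
        ring
    _ ≤ (ε ^ 2)⁻¹ * 2 ^ ((s - 1) / 2) * (2 ^ (s / 2) * wt (s / 2) j * wt (s + 3) q)
        * wt (s + 3) p * wt (s / 2) k := by gcongr
    _ = _ := by ring

theorem isNoiseSymbol_variationSymbol (hs : 0 ≤ s) (hε0 : ε ≠ 0) (hε : ε ^ 2 ≤ 1) :
    IsNoiseSymbol s ((ε ^ 2)⁻¹ ^ 2 * 2 ^ s) (variationSymbol s ε) := fun j p q => by
  set k := j + (p + q)
  set l := j + q with hl
  have hlR : (j : ℝ) + q = l := by rw [hl]; push_cast; rfl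
  have := wt_pos (s / 2) k
  have := wt_pos (s / 2) l
  have := wt_pos (s + 3) p
  have hlk : wt (s / 2) l ≤ 2 ^ (s / 2) * wt (s / 2) k * wt (s + 3) p := by
    rw [(by grind : l = k + -p), ← wt_neg (s + 3) p]
    exact wt_add_right_le_of_le (by linarith) (by linarith) k (-p)
  have hlj : wt (s / 2) l ≤ 2 ^ (s / 2) * wt (s / 2) j * wt (s + 3) q :=
    wt_add_right_le_of_le (by linarith) (by linarith) j q
  have hsymbol : |(l : ℝ)| * symbol s ε l ≤ (ε ^ 2)⁻¹ * wt (s / 2) l :=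
    (abs_mul_symbol_le hε0 hε l).trans (by gcongr; exact wt_le_wt (by linarith) l)
  rw [variationSymbol, hlR, abs_of_nonneg (by positivity)]
  calc (l : ℝ) ^ 2 * symbol s ε l ^ 2 = (|(l : ℝ)| * symbol s ε l) ^ 2 := by
        rw [mul_pow, sq_abs]
    _ ≤ ((ε ^ 2)⁻¹ * wt (s / 2) l) ^ 2 :=
        pow_le_pow_left₀ (mul_nonneg (abs_nonneg _) (symbol_pos ..).le) hsymbol 2
    _ = (ε ^ 2)⁻¹ ^ 2 * (wt (s / 2) l * wt (s / 2) l) := by ring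
    _ ≤ (ε ^ 2)⁻¹ ^ 2 * (2 ^ (s / 2) * wt (s / 2) k * wt (s + 3) p
        * (2 ^ (s / 2) * wt (s / 2) j * wt (s + 3) q)) := by gcongr
    _ = _ := by
        rw [show (2 : ℝ) ^ s = 2 ^ (s / 2) * 2 ^ (s / 2) by
          rw [← Real.rpow_add two_pos, add_halves]]
        ring

section HasSum

variable {K : ℝ} {θ : FC}

/-- `(k, (i, p, q)) ↦ ((i, p, q), k - (p + q))`: the mode `j` of `θ` in terms of the output
mode `k = j + p + q`. -/
def outputEquiv {ι : Type*} : ℤ × (ι × ℤ × ℤ) ≃ (ι × ℤ × ℤ) × ℤ :=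
  (Equiv.prodComm ..).trans (shear fun a : ι × ℤ × ℤ => -(a.2.1 + a.2.2))

/-- `(i, (l, (p, q))) ↦ ((i, (-p, q)), l - q)`: the frequencies of the product of the `l`-th
coefficient of `ξ i θ` with its conjugate. -/
def variationEquiv {ι : Type*} : ι × ℤ × ℤ × ℤ ≃ (ι × ℤ × ℤ) × ℤ where
  toFun a := ((a.1, -a.2.2.1, a.2.2.2), a.2.1 - a.2.2.2)
  invFun w := (w.1.1, w.2 + w.1.2.2, -w.1.2.1, w.1.2.2)
  left_inv _ := by simp
  right_inv _ := by simp

theorem hasSum_mul_tsumFC_lie2 {ξ : ℕ → FC} (hξ : ∀ i, Summable fun p => wt 1 p * ‖ξ i p‖)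
    (hθ : ∀ k, ‖θ k‖ ≤ K) (hsum : Summable (noiseTerm (correctionSymbol s ε) ξ θ)) :
    HasSum (fun k : ℤ => ((symbol s ε k ^ 2 : ℝ) : ℂ) *
      (tsumFC (fun i => lie2 (ξ i) θ) k * conj (θ k)))
      (∑' w, noiseTerm (correctionSymbol s ε) ξ θ w) := by
  rw [← outputEquiv.tsum_eq]
  replace hsum := outputEquiv.summable_iff.2 hsum
  refine (hsum.hasSum.prod_fiberwise fun k => (hsum.prod_factor k).hasSum).congr_fun fun k => ?_
  have hk := hsum.prod_factor k
  rw [hk.tsum_prod, tsumFC, ← tsum_mul_right, ← tsum_mul_left]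
  refine tsum_congr fun i => ?_
  rw [(hk.prod_factor i).tsum_prod, lie2_eq_D1_mul_D1_mul (hξ i) hθ, D1, mul, ← tsum_mul_left,
    ← tsum_mul_right, ← tsum_mul_left]
  refine tsum_congr fun p => ?_
  rw [D1, mul, ← tsum_mul_left, ← tsum_mul_left, ← tsum_mul_left, ← tsum_mul_right,
    ← tsum_mul_left]
  refine tsum_congr fun q => ?_
  have hk : k - (p + q) + (p + q) = k := by ring
  have hkR : ((k - (p + q) : ℤ) : ℝ) + (p + q) = k := by push_cast; ring
  have hp : ((k - (p + q) : ℤ) : ℝ) + q = k - p := by push_cast; ring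
  simp only [Function.comp_apply, outputEquiv, shear, Equiv.trans_apply, Equiv.prodComm_apply,
    Prod.swap_prod_mk, Equiv.prodShear_apply, Equiv.refl_apply, Equiv.coe_addRight,
    ← sub_eq_add_neg, noiseTerm, noiseProd, correctionSymbol, hk, hkR, hp, sub_sub]
  push_cast
  linear_combination ((symbol s ε k : ℂ) ^ 2 * k * (k - p) * ξ i p * ξ i q * θ (k - (p + q))
    * conj (θ k)) * Complex.I_mul_I

theorem ofReal_norm_mul_apply_sq {ξ c : FC} {k : ℤ} (h : Summable fun p => ‖ξ p * c (k - p)‖) :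
    ((‖mul ξ c k‖ ^ 2 : ℝ) : ℂ)
      = ∑' z : ℤ × ℤ, conj (ξ z.1 * c (k - z.1)) * (ξ z.2 * c (k - z.2)) := by
  have hconj : Summable fun p => ‖conj (ξ p * c (k - p))‖ := by
    simpa only [RCLike.norm_conj] using h
  rw [← tsum_mul_tsum_of_summable_norm hconj h, ← Complex.conj_tsum, mul_comm, Complex.mul_conj,
    Complex.normSq_eq_norm_sq, mul]

theorem hasSum_hsNorm_T_lie_sq {ι : Type*} {ξ : ι → FC}
    (hξ : ∀ i, Summable fun p => wt 1 p * ‖ξ i p‖) (hr : ∀ i, isReal (ξ i))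
    (hθ : ∀ k, ‖θ k‖ ≤ K) (hsum : Summable (noiseTerm (variationSymbol s ε) ξ θ)) :
    HasSum (fun i => ((hsNorm s (T ε (lie (ξ i) θ)) ^ 2 : ℝ) : ℂ))
      (∑' w, noiseTerm (variationSymbol s ε) ξ θ w) := by
  rw [← variationEquiv.tsum_eq]
  replace hsum := variationEquiv.summable_iff.2 hsum
  refine (hsum.hasSum.prod_fiberwise fun i => (hsum.prod_factor i).hasSum).congr_fun fun i => ?_
  rw [(hsum.prod_factor i).tsum_prod, hsNorm_T_sq, Complex.ofReal_tsum]
  refine tsum_congr fun l => ?_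
  have hξ₀ : Summable fun p => wt 0 p * ‖ξ i p‖ := summable_wt_mul_norm_of_le zero_le_one (hξ i)
  have hconv := summable_norm_convolution le_rfl hξ₀ (K := K) (c := θ)
    (by simpa only [wt_zero_left, mul_one]) l
  rw [lie_eq_D1_mul_of_bounded (hξ i) hθ, D1, norm_mul, norm_mul, Complex.norm_I,
    Complex.norm_intCast, one_mul, mul_pow, sq_abs, ← mul_assoc, Complex.ofReal_mul,
    ofReal_norm_mul_apply_sq hconv, ← tsum_mul_left]
  refine tsum_congr fun z => ?_
  have hp : l - z.2 + (-z.1 + z.2) = l - z.1 := by ring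
  have hl : ((l - z.2 : ℤ) : ℝ) + z.2 = l := by push_cast; ring
  simp only [Function.comp_apply, variationEquiv, Equiv.coe_fn_mk, noiseTerm, noiseProd,
    variationSymbol, hp, hl, hr i z.1, map_mul]
  push_cast
  ring

end HasSum

end FC

end NoiseIdentities

section EnergyEstimate

open ComplexConjugate

namespace FC

variable {s ε : ℝ}

theorem noiseTerm_add {ι : Type*} (m m' : ℝ → ℝ → ℝ → ℝ) (ξ : ι → FC) (θ : FC) :
    noiseTerm (fun j p q => m j p q + m' j p q) ξ θ = noiseTerm m ξ θ + noiseTerm m' ξ θ := by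
  funext w
  simp only [noiseTerm, Pi.add_apply, Complex.ofReal_add, add_mul]

theorem abs_re_tsum_correctionSymbol_add_tsum_variationSymbol_le {ι : Type*} {ξ : ι → FC}
    {θ : FC} (hs : 1 ≤ s) (hε0 : ε ≠ 0) (hε : ε ^ 2 ≤ 1) (hr : ∀ i, isReal (ξ i))
    (hα : Summable (noiseWeight s ξ)) (hθ : memHs s θ) :
    |(∑' w, noiseTerm (correctionSymbol s ε) ξ θ w
        + ∑' w, noiseTerm (variationSymbol s ε) ξ θ w).re|
      ≤ commutatorConst s / 4 * (∑' a, noiseWeight s ξ a) * hsNorm s θ ^ 2 := by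
  have hs0 : 0 ≤ s := by linarith
  have hcorr := (isNoiseSymbol_correctionSymbol hs hε0 hε).summable_noiseTerm hα hθ
  have hvar := (isNoiseSymbol_variationSymbol hs0 hε0 hε).summable_noiseTerm hα hθ
  have hbound := IsNoiseSymbol.abs_re_tsum_noiseTerm_le_of_symmetrization hr
    (commutatorConst_nonneg s) hα hθ (noiseTerm_add _ _ ξ θ ▸ hcorr.add hvar)
    (isNoiseSymbol_noiseSymmetrization hs0 hε)
  rwa [noiseTerm_add, Pi.add_def, hcorr.tsum_add hvar] at hbound

theorem wt_mul_T_mul_conj_T (s ε : ℝ) (c d : FC) (k : ℤ) :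
    (wt s k : ℂ) * (T ε c k * conj (T ε d k))
      = ((symbol s ε k ^ 2 : ℝ) : ℂ) * (c k * conj (d k)) := by
  simp only [T, mult, symbol_sq, map_mul, Complex.conj_ofReal]
  push_cast
  ring

theorem memHs.two_mul_hsInner_T_gCCF {ξ : ℕ → FC} {θ : FC} (hs : 2 ≤ s) (hε0 : ε ≠ 0)
    (hε : ε ^ 2 ≤ 1) (hξ : ∀ i, Summable fun p => wt 1 p * ‖ξ i p‖)
    (hα : Summable (noiseWeight s ξ)) (hθ : memHs s θ) :
    2 * hsInner s (T ε (gCCF ξ θ)) (T ε θ)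
      = -2 * (∑' q, transportTerm s ε θ q).re
        + (∑' w, noiseTerm (correctionSymbol s ε) ξ θ w).re := by
  have htransport := hθ.hasSum_mul_hilbert_D1 hs hε0 hε
  have hcorr := hasSum_mul_tsumFC_lie2 hξ (hθ.norm_le (by linarith))
    ((isNoiseSymbol_correctionSymbol (by linarith) hε0 hε).summable_noiseTerm hα hθ)
  have hinner : HasSum (fun k => (wt s k : ℂ) * (T ε (gCCF ξ θ) k * conj (T ε θ k)))
      (-(∑' q, transportTerm s ε θ q)
        + (1 / 2 : ℝ) * ∑' w, noiseTerm (correctionSymbol s ε) ξ θ w) := by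
    refine (htransport.neg.add (hcorr.mul_left _)).congr_fun fun k => ?_
    simp only [wt_mul_T_mul_conj_T, gCCF, Pi.add_apply, Pi.neg_apply, Pi.smul_apply,
      Complex.real_smul]
    ring
  rw [hsInner, hinner.tsum_eq, Complex.add_re, Complex.neg_re, Complex.re_ofReal_mul]
  ring

theorem linfty_nonneg (c : FC) : 0 ≤ linfty c := Real.iSup_nonneg fun _ => norm_nonneg _

end FC

end EnergyEstimate

open FC in
theorem statement19_general (s : ℝ) (hs : 2 ≤ s) (ξ : ℕ → FC)
    (hξmem : ∀ k, memHs (2 * s + 8) (ξ k)) (hξreal : ∀ k, isReal (ξ k))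
    (hξsum : Summable fun k => hsNorm (2 * s + 8) (ξ k) ^ 2) :
    ∃ C > 0, ∀ ε : ℝ, ε ∈ Set.Ioc 0 1 → ∀ θ : FC, memHs s θ → isReal θ →
      Summable (fun k => hsNorm s (T ε (lie (ξ k) θ)) ^ 2) ∧
      2 * hsInner s (T ε (gCCF ξ θ)) (T ε θ) + ∑' k, hsNorm s (T ε (lie (ξ k) θ)) ^ 2
        ≤ C * (1 + linfty (D1 θ) + linfty (hilbert (D1 θ))) * hsNorm s θ ^ 2 := by
  obtain ⟨A, hA, htransport⟩ := exists_forall_abs_re_tsum_transportTerm_le hs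
  have hα := summable_noiseWeight hξmem hξsum
  have hξ₁ (i) : Summable fun p => wt 1 p * ‖ξ i p‖ :=
    (hξmem i).summable_wt_mul_norm (by linarith)
  set B := commutatorConst s / 4 * ∑' a, noiseWeight s ξ a
  have hB : 0 ≤ B := mul_nonneg (div_nonneg (commutatorConst_nonneg s) zero_le_four)
    (tsum_nonneg (noiseWeight_nonneg s ξ))
  refine ⟨A + B + 1, by positivity, fun ε ⟨hε0, hε1⟩ θ hθ hθr => ?_⟩
  have hε : ε ^ 2 ≤ 1 := pow_le_one₀ hε0.le hε1
  have hvar := Complex.hasSum_re <| hasSum_hsNorm_T_lie_sq hξ₁ hξreal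
    (hθ.norm_le (by linarith)) ((isNoiseSymbol_variationSymbol (by linarith) hε0.ne'
      hε).summable_noiseTerm hα hθ)
  simp only [Complex.ofReal_re] at hvar
  have hnoise : _ ≤ B * hsNorm s θ ^ 2 :=
    abs_re_tsum_correctionSymbol_add_tsum_variationSymbol_le (by linarith) hε0.ne' hε hξreal hα hθ
  refine ⟨hvar.summable, ?_⟩
  rw [hvar.tsum_eq, hθ.two_mul_hsInner_T_gCCF hs hε0.ne' hε hξ₁ hα, add_assoc, ← Complex.add_re]
  calc _ ≤ 2 * (A * gradNorm θ * hsNorm s θ ^ 2) + B * hsNorm s θ ^ 2 := by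
        linarith [neg_abs_le (∑' q, transportTerm s ε θ q).re, le_of_abs_le hnoise,
          htransport ε hε0.ne' hε θ hθ hθr]
    _ = (A * (linfty (D1 θ) + linfty (hilbert (D1 θ))) + B) * hsNorm s θ ^ 2 := by
        rw [gradNorm]
        ring
    _ ≤ _ := by
        gcongr
        nlinarith [linfty_nonneg (D1 θ), linfty_nonneg (hilbert (D1 θ))]

/-- Let `s > 7/2` and `Σ_k ‖ξ_k‖_{H^σ} < ∞` for all `σ ≥ 0`.  With
`g(θ) = −(𝓗θ)∂ₓθ + ½ Σ_k 𝓛²_{ξ_k}θ` and `T̃_ε = (1−ε²∂ₓ²)⁻¹`, there is `C > 0`, independent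
of `ε`, such that for all `ε ∈ (0,1)` and `θ ∈ H^s(𝕋)`:
`2 (T̃_ε g(θ), T̃_ε θ)_{H^s} + Σ_k ‖T̃_ε 𝓛_{ξ_k} θ‖²_{H^s}`
`≤ C (1 + ‖∂ₓθ‖_{L^∞} + ‖𝓗∂ₓθ‖_{L^∞}) ‖θ‖²_{H^s}`. -/
theorem statement19 (s : ℝ) (hs : 7 / 2 < s) (ξ : ℕ → FC)
    (hξmem : ∀ σ : ℝ, 0 ≤ σ → ∀ k : ℕ, FC.memHs σ (ξ k))
    (hξreal : ∀ k : ℕ, FC.isReal (ξ k))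
    (hξsum : ∀ σ : ℝ, 0 ≤ σ → Summable fun k : ℕ => FC.hsNorm σ (ξ k)) :
    ∃ C > (0 : ℝ), ∀ ε : ℝ, ε ∈ Set.Ioo (0 : ℝ) 1 → ∀ θ : FC,
      FC.memHs s θ → FC.isReal θ →
      Summable (fun k : ℕ => FC.hsNorm s (FC.T ε (FC.lie (ξ k) θ)) ^ 2) ∧
      2 * FC.hsInner s (FC.T ε (gCCF ξ θ)) (FC.T ε θ)
          + ∑' k : ℕ, FC.hsNorm s (FC.T ε (FC.lie (ξ k) θ)) ^ 2
        ≤ C * (1 + FC.linfty (FC.D1 θ) + FC.linfty (FC.hilbert (FC.D1 θ)))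
            * FC.hsNorm s θ ^ 2 := by
  have hσ : 0 ≤ 2 * s + 8 := by linarith
  have hsum := hξsum _ hσ
  obtain ⟨C, hC, hbound⟩ := statement19_general s (by linarith) ξ (hξmem _ hσ) hξreal
    (by simpa only [sq] using hsum.norm.mul_tendsto_const hsum.tendsto_cofinite_zero)
  exact ⟨C, hC, fun ε hε => hbound ε (Set.Ioo_subset_Ioc_self hε)⟩
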